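/- arXiv:1806.03920 — 12 statements merged into one kernel-verified Lean document; each statement's English description precedes it below -/
import Mathlib

section
/- Let n ≥ 1 and let T₁,…,Tₙ : H → Set H be maximal monotone operators on a real Hilbert space H. Then the extended solution set S = {(z, w₁, …, w_{n−1}) ∈ Hⁿ : w_i ∈ T_i z for i = 1,…,n−1, and −(w₁ + ⋯ + w_{n−1}) ∈ Tₙ z} is a closed and convex subset of Hⁿ. -/
open scoped RealInnerProductSpace

/-- A set-valued operator `T : H → Set H` is monotone. -/
def IsMonotoneOp {H : Type*} [NormedAddCommGroup H] [InnerProductSpace ℝ H]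
    (T : H → Set H) : Prop :=
  ∀ x x' y y', y ∈ T x → y' ∈ T x' → 0 ≤ ⟪x - x', y - y'⟫

/-- A set-valued operator is maximal monotone: it is monotone and its graph is not
properly contained in the graph of any other monotone operator. -/
def IsMaximalMonotoneOp {H : Type*} [NormedAddCommGroup H] [InnerProductSpace ℝ H]
    (T : H → Set H) : Prop :=
  IsMonotoneOp T ∧ ∀ T' : H → Set H, IsMonotoneOp T' →
    (∀ x y, y ∈ T x → y ∈ T' x) → ∀ x y, y ∈ T' x → y ∈ T x

theorem mem_iff_of_maximal {H : Type*} [NormedAddCommGroup H] [InnerProductSpace ℝ H]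
    {T : H → Set H} (hT : IsMaximalMonotoneOp T) (x y : H) :
    y ∈ T x ↔ ∀ x' y', y' ∈ T x' → 0 ≤ ⟪x - x', y - y'⟫ := by
  constructor
  · intro h x' y' h'
    exact hT.1 x x' y y' h h'
  · intro h
    refine hT.2 (fun z => {w | w ∈ T z ∨ (z = x ∧ w = y)}) ?_ (fun _ _ h => Or.inl h) x y
      (Or.inr ⟨rfl, rfl⟩)
    rintro a a' b b' (hb | ⟨rfl, rfl⟩) (hb' | ⟨rfl, rfl⟩)
    · exact hT.1 _ _ _ _ hb hb'
    · have := h a b hb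
      rw [← neg_sub a, ← neg_sub b, inner_neg_neg] at this
      exact this
    · exact h _ _ hb'
    · simp

theorem closed_graph_of_maximal {H : Type*} [NormedAddCommGroup H] [InnerProductSpace ℝ H]
    {T : H → Set H} (hT : IsMaximalMonotoneOp T) :
    IsClosed {q : H × H | q.2 ∈ T q.1} := by
  have e : {q : H × H | q.2 ∈ T q.1} =
      ⋂ (x') (y') (_ : y' ∈ T x'), {q : H × H | 0 ≤ ⟪q.1 - x', q.2 - y'⟫} := by
    ext q
    simp only [Set.mem_iInter]
    exact mem_iff_of_maximal hT q.1 q.2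
  rw [e]
  refine isClosed_iInter fun x' => isClosed_iInter fun y' => isClosed_iInter fun _ => ?_
  exact isClosed_le continuous_const (by fun_prop)

theorem comb_mem_of_maximal {H : Type*} [NormedAddCommGroup H] [InnerProductSpace ℝ H]
    {T : H → Set H} (hT : IsMaximalMonotoneOp T) {z z' w w' : H} (h : w ∈ T z) (h' : w' ∈ T z')
    (h0 : ⟪z - z', w - w'⟫ = 0) {a b : ℝ} (ha : 0 ≤ a) (hb : 0 ≤ b) (hab : a + b = 1) :
    a • w + b • w' ∈ T (a • z + b • z') := by
  rw [mem_iff_of_maximal hT]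
  intro x y hy
  have h1 := mul_nonneg ha (hT.1 _ _ _ _ h hy)
  have h2 := mul_nonneg hb (hT.1 _ _ _ _ h' hy)
  have key : ⟪a • z + b • z' - x, a • w + b • w' - y⟫
      = a * ⟪z - x, w - y⟫ + b * ⟪z' - x, w' - y⟫ - a * b * ⟪z - z', w - w'⟫ := by
    obtain rfl : b = 1 - a := by linarith
    simp only [inner_sub_left, inner_sub_right, inner_add_left, inner_add_right,
      real_inner_smul_left, real_inner_smul_right]
    ring
  rw [key, h0]
  linarith

/-- For maximal monotone operators `T 0, …, T m` (so `n = m + 1 ≥ 1`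
operators) on a real Hilbert space `H`, the extended solution set
`S = {(z, w₁, …, w_{n−1}) : wᵢ ∈ Tᵢ z (i = 1,…,n−1), −(w₁+⋯+w_{n−1}) ∈ Tₙ z}`
is a closed and convex subset of `Hⁿ = H × (Fin m → H)`. -/
theorem extended_solution_set_closed_convex
    {H : Type*} [NormedAddCommGroup H] [InnerProductSpace ℝ H] [CompleteSpace H]
    (m : ℕ) (T : Fin (m+1) → H → Set H)
    (hT : ∀ i, IsMaximalMonotoneOp (T i)) :
    IsClosed {p : H × (Fin m → H) |
        (∀ i : Fin m, p.2 i ∈ T i.castSucc p.1) ∧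
        -(∑ i : Fin m, p.2 i) ∈ T (Fin.last m) p.1} ∧
    Convex ℝ {p : H × (Fin m → H) |
        (∀ i : Fin m, p.2 i ∈ T i.castSucc p.1) ∧
        -(∑ i : Fin m, p.2 i) ∈ T (Fin.last m) p.1} := by
  constructor
  · rw [Set.ofPred_and, Set.ofPred_forall]
    refine IsClosed.inter (isClosed_iInter fun i => ?_) ?_
    · exact (closed_graph_of_maximal (hT i.castSucc)).preimage
        (f := fun p : H × (Fin m → H) => (p.1, p.2 i)) (by fun_prop)
    · exact (closed_graph_of_maximal (hT (Fin.last m))).preimage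
        (f := fun p : H × (Fin m → H) => (p.1, -(∑ i : Fin m, p.2 i))) (by fun_prop)
  · rintro ⟨z, w⟩ ⟨hw, hl⟩ ⟨z', w'⟩ ⟨hw', hl'⟩ a b ha hb hab
    dsimp only at hw hl hw' hl'
    have hn : ∀ i ∈ Finset.univ, 0 ≤ ⟪z - z', w i - w' i⟫ := fun i _ =>
      (hT i.castSucc).1 _ _ _ _ (hw i) (hw' i)
    have hnl := (hT (Fin.last m)).1 _ _ _ _ hl hl'
    have e : ⟪z - z', -(∑ i, w i) - -(∑ i, w' i)⟫ = -∑ i, ⟪z - z', w i - w' i⟫ := by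
      rw [← inner_sum, Finset.sum_sub_distrib, ← inner_neg_right]
      congr 1
      abel
    have hs : ∑ i, ⟪z - z', w i - w' i⟫ = 0 :=
      le_antisymm (by linarith) (Finset.sum_nonneg hn)
    have hz := (Finset.sum_eq_zero_iff_of_nonneg hn).1 hs
    refine ⟨fun i => ?_, ?_⟩
    · exact comb_mem_of_maximal (hT _) (hw i) (hw' i) (hz i (Finset.mem_univ i)) ha hb hab
    · have := comb_mem_of_maximal (hT _) hl hl' (by rw [e, hs, neg_zero]) ha hb hab
      change -(∑ i, (a • w i + b • w' i)) ∈ T (Fin.last m) (a • z + b • z')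
      rw [Finset.sum_add_distrib, ← Finset.smul_sum, ← Finset.smul_sum, neg_add,
        ← smul_neg, ← smul_neg]
      exact this
end

section
/- Let n ≥ 1, let T₁,…,Tₙ : H → Set H be monotone operators on a real Hilbert space H, and let points x_i, y_i ∈ H satisfy y_i ∈ T_i x_i for i = 1,…,n. Then for every point (z, w₁, …, w_{n−1}) in the extended solution set S, the separator function satisfies φ(z, w₁,…,w_{n−1}) ≤ 0. -/
open scoped RealInnerProductSpace

/-- If `T 0, …, T m` (`n = m+1 ≥ 1` operators) are monotone,
`yᵢ ∈ Tᵢ xᵢ` for every `i`, and `(z, w₁, …, w_{n−1})` belongs to the extended solution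
set `S`, then the separator function satisfies `φ(z, w₁,…,w_{n−1}) ≤ 0`. -/
theorem separator_nonpos_on_extended_solution_set
    {H : Type*} [NormedAddCommGroup H] [InnerProductSpace ℝ H] [CompleteSpace H]
    (m : ℕ) (T : Fin (m+1) → H → Set H)
    (hT : ∀ i, IsMonotoneOp (T i))
    (x y : Fin (m+1) → H) (hxy : ∀ i, y i ∈ T i (x i))
    (z : H) (w : Fin m → H)
    (hw : ∀ i : Fin m, w i ∈ T i.castSucc z)
    (hwn : -(∑ i : Fin m, w i) ∈ T (Fin.last m) z) :
    (∑ i : Fin m, ⟪z - x i.castSucc, y i.castSucc - w i⟫)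
      + ⟪z - x (Fin.last m), y (Fin.last m) + ∑ i : Fin m, w i⟫ ≤ 0 := by
  have key : ∀ (i : Fin (m+1)) (v : H), v ∈ T i z → ⟪z - x i, y i - v⟫ ≤ 0 := by
    intro i v hv
    have h := hT i z (x i) v (y i) hv (hxy i)
    rw [← neg_sub v (y i), inner_neg_right]
    linarith
  have h1 := Finset.sum_nonpos (s := Finset.univ)
    (fun (i : Fin m) _ => key i.castSucc (w i) (hw i))
  have h2 := key (Fin.last m) _ hwn
  rw [sub_neg_eq_add] at h2
  exact add_nonpos h1 h2
end

section
/- Let K be a real Hilbert space and p* ∈ K. For each t = 1,…,k let g_t ∈ K with g_t ≠ 0, c_t ∈ ℝ, φ_t(p) = ⟨g_t, p⟩ + c_t, and suppose φ_t(p*) ≤ 0 ≤ φ_t(p^t), β_t ∈ [β̲, β̄] with 0 < β̲ ≤ β̄ < 2, and p^{t+1} = p^t − β_t (φ_t(p^t)/‖g_t‖²) g_t. Then Σ_{t=1}^{k} ‖p^{t+1} − p^t‖² ≤ (β̄/(2−β̄)) ‖p¹ − p*‖², and ‖p^{t} − p*‖ ≤ ‖p¹ − p*‖ for every t = 1,…,k+1.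 -/
open scoped RealInnerProductSpace

/-- Iterated relaxed projections onto halfspaces separating the current
point from `p*`: the successive displacements are square-summable with
`∑_{t=1}^k ‖p^{t+1} − p^t‖² ≤ (β̄/(2−β̄)) ‖p¹ − p*‖²`, and the iterates are Fejér
monotone: `‖p^t − p*‖ ≤ ‖p¹ − p*‖` for `t = 1,…,k+1`. -/
theorem relaxed_projection_sequence_summable
    {K : Type*} [NormedAddCommGroup K] [InnerProductSpace ℝ K] [CompleteSpace K]
    (k : ℕ) (hk : 1 ≤ k) (pstar : K)
    (g : ℕ → K) (c : ℕ → ℝ) (φ : ℕ → K → ℝ) (p : ℕ → K) (β : ℕ → ℝ)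
    (βlo βhi : ℝ) (hβlo : 0 < βlo) (hβle : βlo ≤ βhi) (hβhi : βhi < 2)
    (hg : ∀ t, 1 ≤ t → t ≤ k → g t ≠ 0)
    (hφ : ∀ t, 1 ≤ t → t ≤ k → ∀ q, φ t q = ⟪g t, q⟫ + c t)
    (hsep : ∀ t, 1 ≤ t → t ≤ k → φ t pstar ≤ 0 ∧ 0 ≤ φ t (p t))
    (hβ : ∀ t, 1 ≤ t → t ≤ k → βlo ≤ β t ∧ β t ≤ βhi)
    (hupd : ∀ t, 1 ≤ t → t ≤ k →
      p (t+1) = p t - (β t * (φ t (p t) / ‖g t‖ ^ 2)) • g t) :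
    (∑ t ∈ Finset.Icc 1 k, ‖p (t+1) - p t‖ ^ 2 ≤ (βhi / (2 - βhi)) * ‖p 1 - pstar‖ ^ 2) ∧
    (∀ t, 1 ≤ t → t ≤ k + 1 → ‖p t - pstar‖ ≤ ‖p 1 - pstar‖) := by
  have hhi : 0 < βhi := lt_of_lt_of_le hβlo hβle
  have h2 : 0 < 2 - βhi := by linarith
  have step : ∀ t, 1 ≤ t → t ≤ k →
      (2 - βhi) * ‖p (t+1) - p t‖ ^ 2 + βhi * ‖p (t+1) - pstar‖ ^ 2
        ≤ βhi * ‖p t - pstar‖ ^ 2 := by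
    intro t h1 hk'
    obtain ⟨hs1, hs2⟩ := hsep t h1 hk'
    obtain ⟨hb1, hb2⟩ := hβ t h1 hk'
    have hG : 0 < ‖g t‖ ^ 2 := by
      have := norm_pos_iff.mpr (hg t h1 hk')
      positivity
    obtain ⟨s, hs⟩ : ∃ s, s = φ t (p t) / ‖g t‖ ^ 2 := ⟨_, rfl⟩
    have hs0 : 0 ≤ s := by rw [hs]; positivity
    have hsG : s * ‖g t‖ ^ 2 = φ t (p t) := by rw [hs, div_mul_cancel₀ _ hG.ne']
    have hin : s * ‖g t‖ ^ 2 ≤ ⟪g t, p t - pstar⟫ := by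
      rw [hsG, inner_sub_right]
      have e1 := hφ t h1 hk' (p t)
      have e2 := hφ t h1 hk' pstar
      linarith
    have hu := hupd t h1 hk'
    rw [← hs] at hu
    have hD : ‖p (t+1) - p t‖ ^ 2 = (β t * s) ^ 2 * ‖g t‖ ^ 2 := by
      have : p (t+1) - p t = -((β t * s) • g t) := by rw [hu]; abel
      rw [this, norm_neg, norm_smul, mul_pow, Real.norm_eq_abs, sq_abs]
    have hA : ‖p (t+1) - pstar‖ ^ 2 = ‖p t - pstar‖ ^ 2
        - 2 * (β t * s) * ⟪g t, p t - pstar⟫ + (β t * s) ^ 2 * ‖g t‖ ^ 2 := by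
      have : p (t+1) - pstar = (p t - pstar) - (β t * s) • g t := by rw [hu]; abel
      rw [this, norm_sub_sq_real, inner_smul_right, real_inner_comm, norm_smul, mul_pow,
        Real.norm_eq_abs, sq_abs]
      ring
    rw [hD, hA]
    have hb : 0 < β t := lt_of_lt_of_le hβlo hb1
    have k1 : 0 ≤ 2 * βhi * (β t * s) * (⟪g t, p t - pstar⟫ - s * ‖g t‖ ^ 2) :=
      mul_nonneg (by positivity) (sub_nonneg.mpr hin)
    have k2 : 0 ≤ 2 * (β t * s ^ 2 * ‖g t‖ ^ 2) * (βhi - β t) :=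
      mul_nonneg (by positivity) (sub_nonneg.mpr hb2)
    linarith
  have main : ∀ n, n ≤ k →
      (2 - βhi) * ∑ t ∈ Finset.Icc 1 n, ‖p (t+1) - p t‖ ^ 2 + βhi * ‖p (n+1) - pstar‖ ^ 2
        ≤ βhi * ‖p 1 - pstar‖ ^ 2 := by
    intro n
    induction n with
    | zero => intro _; simp
    | succ n ih =>
      intro hn
      have a := ih (by omega)
      have b := step (n+1) (by omega) hn
      rw [Finset.sum_Icc_succ_top (by omega)]
      linarith
  constructor
  · have a := main k le_rfl
    rw [div_mul_eq_mul_div, le_div_iff₀ h2]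
    have : 0 ≤ βhi * ‖p (k+1) - pstar‖ ^ 2 := by positivity
    linarith
  · intro t h1 ht
    obtain ⟨n, rfl⟩ : ∃ n, t = n + 1 := ⟨t - 1, by omega⟩
    have a := main n (by omega)
    have b : 0 ≤ (2 - βhi) * ∑ t ∈ Finset.Icc 1 n, ‖p (t+1) - p t‖ ^ 2 :=
      mul_nonneg h2.le (Finset.sum_nonneg fun _ _ => by positivity)
    have d : βhi * ‖p (n+1) - pstar‖ ^ 2 ≤ βhi * ‖p 1 - pstar‖ ^ 2 := by linarith
    exact (sq_le_sq₀ (norm_nonneg _) (norm_nonneg _)).mp (le_of_mul_le_mul_left d hhi)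
end

section
/- Under the hypotheses of one iteration of projective splitting at (z, w₁,…,w_{n−1}) with wₙ = −(w₁+⋯+w_{n−1}), one has γ⁻¹‖y₁ + ⋯ + yₙ‖² + Σ_{i=1}^{n−1} ‖x_i − x_n‖² ≤ ξ₁ Σ_{i=1}^{n} ‖z − x_i‖², where ξ₁ = 2n[1 + 2γ⁻¹(L̄²|F| + ρ̲⁻²(1+δ))]. (The left-hand side equals the squared γ-weighted norm of the gradient of the separator function.) -/
open scoped RealInnerProductSpace

theorem aux_norm_add_sq {H : Type*} [NormedAddCommGroup H] (a b : H) :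
    ‖a + b‖ ^ 2 ≤ 2 * ‖a‖ ^ 2 + 2 * ‖b‖ ^ 2 := by
  have h := norm_add_le a b
  have h0 := norm_nonneg (a + b)
  nlinarith [sq_nonneg (‖a‖ - ‖b‖)]

theorem aux_scale {H : Type*} [NormedAddCommGroup H] [NormedSpace ℝ H] (r lo : ℝ)
    (hlo : 0 < lo) (hr : lo ≤ r) (u v : H) (h : r • u = v) :
    ‖u‖ ^ 2 ≤ ‖v‖ ^ 2 / lo ^ 2 := by
  rw [le_div_iff₀ (by positivity), ← h, norm_smul, Real.norm_of_nonneg (hlo.le.trans hr), mul_pow,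
    mul_comm]
  gcongr

/-- Bound on the squared γ-weighted norm of the gradient of the separator
function produced by one iteration of projective splitting:
`γ⁻¹‖y₁+⋯+yₙ‖² + Σ_{i<n}‖xᵢ−xₙ‖² ≤ ξ₁ Σᵢ ‖z−xᵢ‖²` with
`ξ₁ = 2n[1 + 2γ⁻¹(L̄²|F| + ρ̲⁻²(1+δ))]`.  Here `n = m+1 ≥ 1`. -/
theorem gradient_bound_one_iteration
    {H : Type*} [NormedAddCommGroup H] [InnerProductSpace ℝ H] [CompleteSpace H]
    (m : ℕ) (γ : ℝ) (hγ : 0 < γ)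
    (B F : Finset (Fin (m+1))) (hBF : Disjoint B F) (hBFunion : B ∪ F = Finset.univ)
    (T : Fin (m+1) → H → Set H) (Tf : Fin (m+1) → H → H) (L : Fin (m+1) → ℝ)
    (hTmono : ∀ i ∈ B, ∀ x x' y y' : H, y ∈ T i x → y' ∈ T i x' → 0 ≤ ⟪x - x', y - y'⟫)
    (hTfmono : ∀ i ∈ F, ∀ u v : H, 0 ≤ ⟪u - v, Tf i u - Tf i v⟫)
    (hL0 : ∀ i ∈ F, 0 ≤ L i)
    (hLip : ∀ i ∈ F, ∀ u v : H, ‖Tf i u - Tf i v‖ ≤ L i * ‖u - v‖)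
    (z : H) (w : Fin m → H) (wfull : Fin (m+1) → H)
    (hwfull : wfull = Fin.snoc w (-(∑ i : Fin m, w i)))
    (x y : Fin (m+1) → H) (ρ : Fin (m+1) → ℝ) (e : Fin (m+1) → H)
    (σ δ : ℝ) (hσ0 : 0 ≤ σ) (hσ1 : σ < 1) (hδ : 0 ≤ δ)
    (ρlo ρhi : ℝ) (ρbar : Fin (m+1) → ℝ)
    (hρlo : 0 < ρlo) (hρge : ∀ i, ρlo ≤ ρ i)
    (hρB : ∀ i ∈ B, ρ i ≤ ρhi)
    (hρF : ∀ i ∈ F, ρ i ≤ ρbar i ∧ ρbar i * L i < 1)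
    (hback : ∀ i ∈ B, y i ∈ T i (x i) ∧ x i + ρ i • y i = z + ρ i • wfull i + e i)
    (hforw : ∀ i ∈ F, x i = z - ρ i • (Tf i z - wfull i) ∧ y i = Tf i (x i))
    (herr1 : ∀ i ∈ B, -(σ * ‖z - x i‖ ^ 2) ≤ ⟪z - x i, e i⟫)
    (herr2 : ∀ i ∈ B, ⟪e i, y i - wfull i⟫ ≤ ρ i * σ * ‖y i - wfull i‖ ^ 2)
    (herr3 : ∀ i ∈ B, ‖e i‖ ^ 2 ≤ δ * ‖z - x i‖ ^ 2)
    (Lbar : ℝ)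
    (hLbar : Lbar = Finset.univ.sup' Finset.univ_nonempty (fun i => if i ∈ F then L i else 0))
    (ξ₁ : ℝ)
    (hξ₁ : ξ₁ = 2 * (m+1 : ℝ) *
      (1 + 2 / γ * (Lbar ^ 2 * (F.card : ℝ) + (1 + δ) / ρlo ^ 2))) :
    (1 / γ) * ‖∑ i : Fin (m+1), y i‖ ^ 2
      + ∑ i : Fin m, ‖x i.castSucc - x (Fin.last m)‖ ^ 2
      ≤ ξ₁ * ∑ i : Fin (m+1), ‖z - x i‖ ^ 2 := by
  set S := ∑ i : Fin (m+1), ‖z - x i‖ ^ 2 with hS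
  have hw : ∑ i, wfull i = 0 := by
    rw [hwfull, Fin.sum_univ_castSucc]
    simp
  have hsum : ∑ i, y i = ∑ i, (y i - wfull i) := by
    rw [Finset.sum_sub_distrib, hw, sub_zero]
  have hstep : ∀ i, ‖y i - wfull i‖ ^ 2 ≤
      4 * (Lbar ^ 2 * (F.card : ℝ) + (1 + δ) / ρlo ^ 2) * ‖z - x i‖ ^ 2 := by
    intro i
    have hi : i ∈ B ∪ F := by rw [hBFunion]; exact Finset.mem_univ i
    have hd : 0 ≤ ‖z - x i‖ ^ 2 / ρlo ^ 2 := by positivity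
    have hdd : 0 ≤ δ * (‖z - x i‖ ^ 2 / ρlo ^ 2) := by positivity
    have hLF : 0 ≤ Lbar ^ 2 * (F.card : ℝ) * ‖z - x i‖ ^ 2 := by positivity
    have hexp : 4 * (Lbar ^ 2 * (F.card : ℝ) + (1 + δ) / ρlo ^ 2) * ‖z - x i‖ ^ 2
        = 4 * (Lbar ^ 2 * (F.card : ℝ) * ‖z - x i‖ ^ 2) + 4 * (‖z - x i‖ ^ 2 / ρlo ^ 2)
          + 4 * (δ * (‖z - x i‖ ^ 2 / ρlo ^ 2)) := by ring
    rw [hexp]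
    rcases Finset.mem_union.1 hi with hB | hF
    · have h1 : ρ i • (y i - wfull i) = (z - x i) + e i := by
        have := (hback i hB).2
        rw [smul_sub]
        have h0 : ρ i • y i = z + ρ i • wfull i + e i - x i := by rw [← this]; abel
        rw [h0]; abel
      have h2 := aux_scale _ _ hρlo (hρge i) _ _ h1
      have h3 := aux_norm_add_sq (z - x i) (e i)
      have h4 := herr3 i hB
      have h5 : ‖(z - x i) + e i‖ ^ 2 / ρlo ^ 2 ≤
          (2 * ‖z - x i‖ ^ 2 + 2 * (δ * ‖z - x i‖ ^ 2)) / ρlo ^ 2 := by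
        gcongr
        linarith
      have h6 : (2 * ‖z - x i‖ ^ 2 + 2 * (δ * ‖z - x i‖ ^ 2)) / ρlo ^ 2 =
        2 * (‖z - x i‖ ^ 2 / ρlo ^ 2) + 2 * (δ * (‖z - x i‖ ^ 2 / ρlo ^ 2)) := by ring
      linarith
    · obtain ⟨hx, hy⟩ := hforw i hF
      have h1 : ρ i • (Tf i z - wfull i) = z - x i := by
        rw [hx]; abel
      have h2 := aux_scale _ _ hρlo (hρge i) _ _ h1
      have h3 := aux_norm_add_sq (Tf i (x i) - Tf i z) (Tf i z - wfull i)
      rw [sub_add_sub_cancel, ← hy] at h3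
      have hLb : L i ≤ Lbar := by
        rw [hLbar]
        have := Finset.le_sup' (fun i => if i ∈ F then L i else 0) (Finset.mem_univ i)
        simp only [hF, if_true] at this
        exact this
      have h4 : ‖y i - Tf i z‖ ^ 2 ≤ Lbar ^ 2 * ‖z - x i‖ ^ 2 := by
        rw [← mul_pow, hy, norm_sub_rev z]
        have := hLip i hF (x i) z
        gcongr
        exact this.trans (by gcongr)
      have h5 : (1 : ℝ) ≤ F.card := by
        exact_mod_cast Finset.card_pos.2 ⟨i, hF⟩
      have h6 : Lbar ^ 2 * ‖z - x i‖ ^ 2 ≤ Lbar ^ 2 * (F.card : ℝ) * ‖z - x i‖ ^ 2 := by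
        gcongr
        exact le_mul_of_one_le_right (by positivity) h5
      linarith
  have hA : ‖∑ i, y i‖ ^ 2 ≤
      (m + 1 : ℝ) * (4 * (Lbar ^ 2 * (F.card : ℝ) + (1 + δ) / ρlo ^ 2) * S) := by
    rw [hsum]
    calc ‖∑ i, (y i - wfull i)‖ ^ 2 ≤ (∑ i, ‖y i - wfull i‖) ^ 2 := by
          gcongr
          exact norm_sum_le _ _
      _ ≤ (m + 1 : ℝ) * ∑ i, ‖y i - wfull i‖ ^ 2 := by
          have := sq_sum_le_card_mul_sum_sq (s := Finset.univ) (f := fun i => ‖y i - wfull i‖)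
          simpa using this
      _ ≤ _ := by
          rw [hS, Finset.mul_sum (f := fun i => ‖z - x i‖ ^ 2)]
          exact mul_le_mul_of_nonneg_left (Finset.sum_le_sum fun i _ => hstep i)
            (by positivity : (0 : ℝ) ≤ m + 1)
  have hC : ∑ i : Fin m, ‖x i.castSucc - x (Fin.last m)‖ ^ 2 ≤ 2 * (m + 1 : ℝ) * S := by
    have hSsplit : S = ∑ i : Fin m, ‖z - x i.castSucc‖ ^ 2 + ‖z - x (Fin.last m)‖ ^ 2 := by
      rw [hS, Fin.sum_univ_castSucc]
    have h0 : 0 ≤ ∑ i : Fin m, ‖z - x i.castSucc‖ ^ 2 := by positivity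
    have h1 : ∑ i : Fin m, ‖x i.castSucc - x (Fin.last m)‖ ^ 2 ≤
        ∑ i : Fin m, (2 * ‖z - x i.castSucc‖ ^ 2 + 2 * ‖z - x (Fin.last m)‖ ^ 2) := by
      gcongr with i
      have := aux_norm_add_sq (x i.castSucc - z) (z - x (Fin.last m))
      rwa [sub_add_sub_cancel, norm_sub_rev (x i.castSucc) z] at this
    rw [Finset.sum_add_distrib, ← Finset.mul_sum] at h1
    simp only [Finset.sum_const, Finset.card_univ, Fintype.card_fin, nsmul_eq_mul] at h1
    rw [hSsplit]
    have hm : (0 : ℝ) ≤ m := Nat.cast_nonneg m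
    nlinarith [mul_nonneg hm h0, sq_nonneg ‖z - x (Fin.last m)‖]
  have hA' := mul_le_mul_of_nonneg_left hA (by positivity : 0 ≤ 1 / γ)
  rw [hξ₁]
  refine (add_le_add hA' hC).trans (le_of_eq ?_)
  ring
end

section
/- Under the hypotheses of one iteration of projective splitting at (z, w₁,…,w_{n−1}), the separator function φ built from the points (x_i, y_i) satisfies φ(z, w₁,…,w_{n−1}) ≥ ξ₂ Σ_{i=1}^{n} ‖z − x_i‖², where ξ₂ = min{(1−σ)ρ̄⁻¹, min_{j∈F}(ρ̄_j⁻¹ − L_j)} > 0. -/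
open scoped RealInnerProductSpace

/-- Lower bound for the separator function at the current point of one
iteration of projective splitting: `φ(z, w₁,…,w_{n−1}) ≥ ξ₂ Σᵢ ‖z − xᵢ‖²` with
`ξ₂ = min{(1−σ)ρ̄⁻¹, min_{j∈F}(ρ̄ⱼ⁻¹ − Lⱼ)} > 0`.  Here `n = m+1 ≥ 1`. -/
theorem separator_lower_bound_one_iteration
    {H : Type*} [NormedAddCommGroup H] [InnerProductSpace ℝ H] [CompleteSpace H]
    (m : ℕ) (γ : ℝ) (hγ : 0 < γ)
    (B F : Finset (Fin (m+1))) (hBF : Disjoint B F) (hBFunion : B ∪ F = Finset.univ)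
    (T : Fin (m+1) → H → Set H) (Tf : Fin (m+1) → H → H) (L : Fin (m+1) → ℝ)
    (hTmono : ∀ i ∈ B, ∀ x x' y y' : H, y ∈ T i x → y' ∈ T i x' → 0 ≤ ⟪x - x', y - y'⟫)
    (hTfmono : ∀ i ∈ F, ∀ u v : H, 0 ≤ ⟪u - v, Tf i u - Tf i v⟫)
    (hL0 : ∀ i ∈ F, 0 ≤ L i)
    (hLip : ∀ i ∈ F, ∀ u v : H, ‖Tf i u - Tf i v‖ ≤ L i * ‖u - v‖)
    (z : H) (w : Fin m → H) (wfull : Fin (m+1) → H)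
    (hwfull : wfull = Fin.snoc w (-(∑ i : Fin m, w i)))
    (x y : Fin (m+1) → H) (ρ : Fin (m+1) → ℝ) (e : Fin (m+1) → H)
    (σ δ : ℝ) (hσ0 : 0 ≤ σ) (hσ1 : σ < 1) (hδ : 0 ≤ δ)
    (ρlo ρhi : ℝ) (ρbar : Fin (m+1) → ℝ)
    (hρlo : 0 < ρlo) (hρge : ∀ i, ρlo ≤ ρ i)
    (hρB : ∀ i ∈ B, ρ i ≤ ρhi)
    (hρF : ∀ i ∈ F, ρ i ≤ ρbar i ∧ ρbar i * L i < 1)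
    (hback : ∀ i ∈ B, y i ∈ T i (x i) ∧ x i + ρ i • y i = z + ρ i • wfull i + e i)
    (hforw : ∀ i ∈ F, x i = z - ρ i • (Tf i z - wfull i) ∧ y i = Tf i (x i))
    (herr1 : ∀ i ∈ B, -(σ * ‖z - x i‖ ^ 2) ≤ ⟪z - x i, e i⟫)
    (herr2 : ∀ i ∈ B, ⟪e i, y i - wfull i⟫ ≤ ρ i * σ * ‖y i - wfull i‖ ^ 2)
    (herr3 : ∀ i ∈ B, ‖e i‖ ^ 2 ≤ δ * ‖z - x i‖ ^ 2)
    (φval : ℝ)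
    (hφval : φval = (∑ i : Fin m, ⟪z - x i.castSucc, y i.castSucc - w i⟫)
      + ⟪z - x (Fin.last m), y (Fin.last m) + ∑ i : Fin m, w i⟫)
    (ξ₂ : ℝ)
    (hξ₂ : ξ₂ = Finset.univ.inf' Finset.univ_nonempty
      (fun i => if i ∈ B then (1 - σ) / ρhi else 1 / ρbar i - L i)) :
    0 < ξ₂ ∧ ξ₂ * ∑ i : Fin (m+1), ‖z - x i‖ ^ 2 ≤ φval := by
  have hmem : ∀ i, i ∉ B → i ∈ F := by
    intro i hi
    have h : i ∈ B ∪ F := by rw [hBFunion]; exact Finset.mem_univ i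
    rcases Finset.mem_union.1 h with h | h
    · exact absurd h hi
    · exact h
  have hρ : ∀ i, 0 < ρ i := fun i => lt_of_lt_of_le hρlo (hρge i)
  have hφ : φval = ∑ i : Fin (m+1), ⟪z - x i, y i - wfull i⟫ := by
    rw [hφval, Fin.sum_univ_castSucc, hwfull]
    simp
  refine ⟨?_, ?_⟩
  · rw [hξ₂, Finset.lt_inf'_iff]
    intro i _
    by_cases hi : i ∈ B
    · simp only [hi, if_true]
      exact div_pos (by linarith) (lt_of_lt_of_le (hρ i) (hρB i hi))
    · simp only [hi, if_false]
      obtain ⟨h1, h2⟩ := hρF i (hmem i hi)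
      have h3 : 0 < ρbar i := lt_of_lt_of_le (hρ i) h1
      have h4 : L i < 1 / ρbar i := by
        rw [lt_div_iff₀ h3]; linarith
      linarith
  · rw [hφ, Finset.mul_sum]
    refine Finset.sum_le_sum fun i _ => ?_
    have hle : ξ₂ ≤ if i ∈ B then (1 - σ) / ρhi else 1 / ρbar i - L i := by
      rw [hξ₂]
      exact Finset.inf'_le (fun i => if i ∈ B then (1 - σ) / ρhi else 1 / ρbar i - L i)
        (Finset.mem_univ i)
    have hn : 0 ≤ ‖z - x i‖ ^ 2 := by positivity
    refine (mul_le_mul_of_nonneg_right hle hn).trans ?_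
    by_cases hi : i ∈ B
    · simp only [hi, if_true]
      have h1 : ρ i • (y i - wfull i) = (z - x i) + e i := by
        have := (hback i hi).2
        rw [smul_sub, sub_eq_iff_eq_add]
        rw [← eq_sub_iff_add_eq'] at this
        rw [this]; abel
      have h2 : ρ i * ⟪z - x i, y i - wfull i⟫ = ‖z - x i‖ ^ 2 + ⟪z - x i, e i⟫ := by
        rw [← real_inner_smul_right, h1, inner_add_right, real_inner_self_eq_norm_sq]
      have h3 := herr1 i hi
      have h4 : (1 - σ) / ρhi ≤ (1 - σ) / ρ i :=
        div_le_div_of_nonneg_left (by linarith) (hρ i) (hρB i hi)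
      refine (mul_le_mul_of_nonneg_right h4 hn).trans ?_
      rw [div_mul_eq_mul_div, div_le_iff₀ (hρ i)]
      linarith
    · simp only [hi, if_false]
      have hF := hmem i hi
      obtain ⟨hx, hy⟩ := hforw i hF
      have h1 : ρ i • (Tf i z - wfull i) = z - x i := by
        rw [hx]; abel
      have h2 : ρ i * ⟪z - x i, Tf i z - wfull i⟫ = ‖z - x i‖ ^ 2 := by
        rw [← real_inner_smul_right, h1, real_inner_self_eq_norm_sq]
      have h3 : ⟪z - x i, y i - wfull i⟫
          = ⟪z - x i, Tf i z - wfull i⟫ - ⟪z - x i, Tf i z - Tf i (x i)⟫ := by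
        rw [← inner_sub_right, hy]; congr 1; abel
      have h4 : ⟪z - x i, Tf i z - Tf i (x i)⟫ ≤ L i * ‖z - x i‖ ^ 2 := by
        refine (real_inner_le_norm _ _).trans ?_
        have := mul_le_mul_of_nonneg_left (hLip i hF z (x i)) (norm_nonneg (z - x i))
        linarith
      have h5 : 1 / ρbar i ≤ 1 / ρ i := one_div_le_one_div_of_le (hρ i) (hρF i hF).1
      have h6 : ⟪z - x i, Tf i z - wfull i⟫ = 1 / ρ i * ‖z - x i‖ ^ 2 := by
        rw [← h2]; field_simp [(hρ i).ne']
      have h7 := mul_le_mul_of_nonneg_right h5 hn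
      rw [h3, h6, sub_mul]
      linarith
end

section
/- Under the hypotheses of one iteration of projective splitting at (z, w₁,…,w_{n−1}), the separator function φ built from the points (x_i, y_i) satisfies φ(z, w₁,…,w_{n−1}) + Σ_{i∈F} L_i ‖z − x_i‖² ≥ (1−σ) ρ̲ Σ_{i∈B} ‖y_i − w_i‖² + ρ̲ Σ_{i∈F} ‖T_i z − w_i‖². -/
open scoped RealInnerProductSpace

/-- Alternative lower bound for the separator function at the current
point of one iteration of projective splitting:
`φ(z,w₁,…,w_{n−1}) + Σ_{i∈F} Lᵢ‖z−xᵢ‖² ≥ (1−σ)ρ̲ Σ_{i∈B}‖yᵢ−wᵢ‖² + ρ̲ Σ_{i∈F}‖Tᵢz−wᵢ‖²`.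
Here `n = m+1 ≥ 1`. -/
theorem separator_alt_lower_bound_one_iteration
    {H : Type*} [NormedAddCommGroup H] [InnerProductSpace ℝ H] [CompleteSpace H]
    (m : ℕ) (γ : ℝ) (hγ : 0 < γ)
    (B F : Finset (Fin (m+1))) (hBF : Disjoint B F) (hBFunion : B ∪ F = Finset.univ)
    (T : Fin (m+1) → H → Set H) (Tf : Fin (m+1) → H → H) (L : Fin (m+1) → ℝ)
    (hTmono : ∀ i ∈ B, ∀ x x' y y' : H, y ∈ T i x → y' ∈ T i x' → 0 ≤ ⟪x - x', y - y'⟫)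
    (hTfmono : ∀ i ∈ F, ∀ u v : H, 0 ≤ ⟪u - v, Tf i u - Tf i v⟫)
    (hL0 : ∀ i ∈ F, 0 ≤ L i)
    (hLip : ∀ i ∈ F, ∀ u v : H, ‖Tf i u - Tf i v‖ ≤ L i * ‖u - v‖)
    (z : H) (w : Fin m → H) (wfull : Fin (m+1) → H)
    (hwfull : wfull = Fin.snoc w (-(∑ i : Fin m, w i)))
    (x y : Fin (m+1) → H) (ρ : Fin (m+1) → ℝ) (e : Fin (m+1) → H)
    (σ δ : ℝ) (hσ0 : 0 ≤ σ) (hσ1 : σ < 1) (hδ : 0 ≤ δ)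
    (ρlo ρhi : ℝ) (ρbar : Fin (m+1) → ℝ)
    (hρlo : 0 < ρlo) (hρge : ∀ i, ρlo ≤ ρ i)
    (hρB : ∀ i ∈ B, ρ i ≤ ρhi)
    (hρF : ∀ i ∈ F, ρ i ≤ ρbar i ∧ ρbar i * L i < 1)
    (hback : ∀ i ∈ B, y i ∈ T i (x i) ∧ x i + ρ i • y i = z + ρ i • wfull i + e i)
    (hforw : ∀ i ∈ F, x i = z - ρ i • (Tf i z - wfull i) ∧ y i = Tf i (x i))
    (herr1 : ∀ i ∈ B, -(σ * ‖z - x i‖ ^ 2) ≤ ⟪z - x i, e i⟫)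
    (herr2 : ∀ i ∈ B, ⟪e i, y i - wfull i⟫ ≤ ρ i * σ * ‖y i - wfull i‖ ^ 2)
    (herr3 : ∀ i ∈ B, ‖e i‖ ^ 2 ≤ δ * ‖z - x i‖ ^ 2)
    (φval : ℝ)
    (hφval : φval = (∑ i : Fin m, ⟪z - x i.castSucc, y i.castSucc - w i⟫)
      + ⟪z - x (Fin.last m), y (Fin.last m) + ∑ i : Fin m, w i⟫) :
    (1 - σ) * ρlo * (∑ i ∈ B, ‖y i - wfull i‖ ^ 2)
      + ρlo * (∑ i ∈ F, ‖Tf i z - wfull i‖ ^ 2)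
      ≤ φval + ∑ i ∈ F, L i * ‖z - x i‖ ^ 2 := by
  have hφ : φval = ∑ i ∈ B, ⟪z - x i, y i - wfull i⟫ + ∑ i ∈ F, ⟪z - x i, y i - wfull i⟫ := by
    rw [← Finset.sum_union hBF, hBFunion, Fin.sum_univ_castSucc, hφval, hwfull]
    simp only [Fin.snoc_castSucc, Fin.snoc_last, sub_neg_eq_add]
  have h1 : (1 - σ) * ρlo * (∑ i ∈ B, ‖y i - wfull i‖ ^ 2)
      ≤ ∑ i ∈ B, ⟪z - x i, y i - wfull i⟫ := by
    rw [Finset.mul_sum]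
    refine Finset.sum_le_sum fun i hi => ?_
    have hz : z - x i = ρ i • (y i - wfull i) - e i := by
      have h := (hback i hi).2
      have h' : x i = z + ρ i • wfull i + e i - ρ i • y i := eq_sub_of_add_eq h
      rw [h', smul_sub]
      abel
    rw [hz, inner_sub_left, real_inner_smul_left, real_inner_self_eq_norm_sq]
    have h2 := herr2 i hi
    have h3 : 0 ≤ (1 - σ) * (ρ i - ρlo) * ‖y i - wfull i‖ ^ 2 :=
      mul_nonneg (mul_nonneg (by linarith) (by linarith [hρge i])) (sq_nonneg _)
    nlinarith
  have h2 : ρlo * (∑ i ∈ F, ‖Tf i z - wfull i‖ ^ 2)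
      ≤ ∑ i ∈ F, ⟪z - x i, y i - wfull i⟫ + ∑ i ∈ F, L i * ‖z - x i‖ ^ 2 := by
    rw [Finset.mul_sum, ← Finset.sum_add_distrib]
    refine Finset.sum_le_sum fun i hi => ?_
    obtain ⟨hx, hy⟩ := hforw i hi
    have hz : z - x i = ρ i • (Tf i z - wfull i) := by
      rw [hx]
      abel
    have ha : ⟪z - x i, y i - wfull i⟫
        = ⟪z - x i, Tf i z - wfull i⟫ - ⟪z - x i, Tf i z - Tf i (x i)⟫ := by
      rw [← inner_sub_right, hy]
      congr 1
      abel
    have hb : ⟪z - x i, Tf i z - wfull i⟫ = ρ i * ‖Tf i z - wfull i‖ ^ 2 := by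
      rw [hz, real_inner_smul_left, real_inner_self_eq_norm_sq]
    have hc : ⟪z - x i, Tf i z - Tf i (x i)⟫ ≤ L i * ‖z - x i‖ ^ 2 := by
      calc _ ≤ ‖z - x i‖ * ‖Tf i z - Tf i (x i)‖ := real_inner_le_norm _ _
        _ ≤ ‖z - x i‖ * (L i * ‖z - x i‖) :=
          mul_le_mul_of_nonneg_left (hLip i hi _ _) (norm_nonneg _)
        _ = _ := by ring
    have hd := mul_le_mul_of_nonneg_right (hρge i) (sq_nonneg ‖Tf i z - wfull i‖)
    linarith
  linarith
end

section
/- Under the hypotheses of one iteration of projective splitting at p = (z, w₁,…,w_{n−1}), suppose π := γ⁻¹‖y₁+⋯+yₙ‖² + Σ_{i=1}^{n−1}‖x_i − x_n‖² > 0 and let β > 0. Then the relaxed projection steplength α = β φ(z,w₁,…,w_{n−1})/π satisfies α ≥ β ξ₂/ξ₁ > 0, where ξ₁ = 2n[1 + 2γ⁻¹(L̄²|F| + ρ̲⁻²(1+δ))] and ξ₂ = min{(1−σ)ρ̄⁻¹, min_{j∈F}(ρ̄_j⁻¹ − L_j)}. -/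
open scoped RealInnerProductSpace

/-- The relaxed projection steplength `α = β φ(p)/π` of one iteration of
projective splitting, where `π = γ⁻¹‖y₁+⋯+yₙ‖² + Σ_{i<n}‖xᵢ−xₙ‖² > 0` is the squared
γ-weighted norm of the gradient of the separator function, is bounded below:
`α ≥ β ξ₂/ξ₁ > 0`.  Here `n = m+1 ≥ 1`. -/
theorem steplength_lower_bound_one_iteration
    {H : Type*} [NormedAddCommGroup H] [InnerProductSpace ℝ H] [CompleteSpace H]
    (m : ℕ) (γ : ℝ) (hγ : 0 < γ)
    (B F : Finset (Fin (m+1))) (hBF : Disjoint B F) (hBFunion : B ∪ F = Finset.univ)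
    (T : Fin (m+1) → H → Set H) (Tf : Fin (m+1) → H → H) (L : Fin (m+1) → ℝ)
    (hTmono : ∀ i ∈ B, ∀ x x' y y' : H, y ∈ T i x → y' ∈ T i x' → 0 ≤ ⟪x - x', y - y'⟫)
    (hTfmono : ∀ i ∈ F, ∀ u v : H, 0 ≤ ⟪u - v, Tf i u - Tf i v⟫)
    (hL0 : ∀ i ∈ F, 0 ≤ L i)
    (hLip : ∀ i ∈ F, ∀ u v : H, ‖Tf i u - Tf i v‖ ≤ L i * ‖u - v‖)
    (z : H) (w : Fin m → H) (wfull : Fin (m+1) → H)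
    (hwfull : wfull = Fin.snoc w (-(∑ i : Fin m, w i)))
    (x y : Fin (m+1) → H) (ρ : Fin (m+1) → ℝ) (e : Fin (m+1) → H)
    (σ δ : ℝ) (hσ0 : 0 ≤ σ) (hσ1 : σ < 1) (hδ : 0 ≤ δ)
    (ρlo ρhi : ℝ) (ρbar : Fin (m+1) → ℝ)
    (hρlo : 0 < ρlo) (hρge : ∀ i, ρlo ≤ ρ i)
    (hρB : ∀ i ∈ B, ρ i ≤ ρhi)
    (hρF : ∀ i ∈ F, ρ i ≤ ρbar i ∧ ρbar i * L i < 1)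
    (hback : ∀ i ∈ B, y i ∈ T i (x i) ∧ x i + ρ i • y i = z + ρ i • wfull i + e i)
    (hforw : ∀ i ∈ F, x i = z - ρ i • (Tf i z - wfull i) ∧ y i = Tf i (x i))
    (herr1 : ∀ i ∈ B, -(σ * ‖z - x i‖ ^ 2) ≤ ⟪z - x i, e i⟫)
    (herr2 : ∀ i ∈ B, ⟪e i, y i - wfull i⟫ ≤ ρ i * σ * ‖y i - wfull i‖ ^ 2)
    (herr3 : ∀ i ∈ B, ‖e i‖ ^ 2 ≤ δ * ‖z - x i‖ ^ 2)
    (φval : ℝ)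
    (hφval : φval = (∑ i : Fin m, ⟪z - x i.castSucc, y i.castSucc - w i⟫)
      + ⟪z - x (Fin.last m), y (Fin.last m) + ∑ i : Fin m, w i⟫)
    (Lbar : ℝ)
    (hLbar : Lbar = Finset.univ.sup' Finset.univ_nonempty (fun i => if i ∈ F then L i else 0))
    (ξ₁ : ℝ)
    (hξ₁ : ξ₁ = 2 * (m+1 : ℝ) *
      (1 + 2 / γ * (Lbar ^ 2 * (F.card : ℝ) + (1 + δ) / ρlo ^ 2)))
    (ξ₂ : ℝ)
    (hξ₂ : ξ₂ = Finset.univ.inf' Finset.univ_nonempty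
      (fun i => if i ∈ B then (1 - σ) / ρhi else 1 / ρbar i - L i))
    (π : ℝ)
    (hπdef : π = (1 / γ) * ‖∑ i : Fin (m+1), y i‖ ^ 2
      + ∑ i : Fin m, ‖x i.castSucc - x (Fin.last m)‖ ^ 2)
    (hπpos : 0 < π)
    (β α : ℝ) (hβ : 0 < β) (hα : α = β * φval / π) :
    β * ξ₂ / ξ₁ ≤ α ∧ 0 < β * ξ₂ / ξ₁ := by
  have hρpos : ∀ i, 0 < ρ i := fun i => lt_of_lt_of_le hρlo (hρge i)
  have hcase : ∀ i, i ∈ B ∨ i ∈ F := by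
    intro i
    have : i ∈ B ∪ F := by rw [hBFunion]; exact Finset.mem_univ i
    exact Finset.mem_union.mp this
  have hFB : ∀ i ∈ F, i ∉ B := fun i hi hb => Finset.disjoint_left.mp hBF hb hi
  have hwc : ∀ i : Fin m, wfull i.castSucc = w i := by
    intro i; rw [hwfull]; simp
  have hwl : wfull (Fin.last m) = -(∑ i : Fin m, w i) := by
    rw [hwfull]; simp
  have hwsum : ∑ i, wfull i = 0 := by
    rw [Fin.sum_univ_castSucc, hwl]; simp [hwc]
  have hφ : φval = ∑ i, ⟪z - x i, y i - wfull i⟫ := by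
    rw [hφval, Fin.sum_univ_castSucc, hwl]; simp [hwc]
  -- key identities
  have hBid : ∀ i ∈ B, y i - wfull i = (ρ i)⁻¹ • ((z - x i) + e i) := by
    intro i hi
    have h := (hback i hi).2
    have h2 : (z - x i) + e i = ρ i • (y i - wfull i) := by
      rw [smul_sub]
      have : e i = x i + ρ i • y i - (z + ρ i • wfull i) := by rw [h]; abel
      rw [this]; abel
    rw [h2, smul_smul, inv_mul_cancel₀ (hρpos i).ne', one_smul]
  have hFid : ∀ i ∈ F, y i - wfull i = (ρ i)⁻¹ • (z - x i) - (Tf i z - Tf i (x i)) := by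
    intro i hi
    obtain ⟨h, h'⟩ := hforw i hi
    have h2 : z - x i = ρ i • (Tf i z - wfull i) := by
      rw [h]; abel
    rw [h2, smul_smul, inv_mul_cancel₀ (hρpos i).ne', one_smul, h']; abel
  have hξ₂le : ∀ i, ξ₂ ≤ if i ∈ B then (1 - σ) / ρhi else 1 / ρbar i - L i := by
    intro i
    rw [hξ₂]
    exact Finset.inf'_le (fun i => if i ∈ B then (1 - σ) / ρhi else 1 / ρbar i - L i)
      (Finset.mem_univ i)
  have hξ₂pos : 0 < ξ₂ := by
    rw [hξ₂, Finset.lt_inf'_iff]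
    intro i _
    rcases hcase i with hi | hi
    · simp only [hi, if_true]
      exact div_pos (by linarith) (lt_of_lt_of_le (hρpos i) (hρB i hi))
    · simp only [hFB i hi, if_false]
      obtain ⟨h1, h2⟩ := hρF i hi
      have h3 := lt_of_lt_of_le (hρpos i) h1
      have : L i < 1 / ρbar i := by rw [lt_div_iff₀ h3]; linarith
      linarith
  have hφi : ∀ i, ξ₂ * ‖z - x i‖ ^ 2 ≤ ⟪z - x i, y i - wfull i⟫ := by
    intro i
    have hle := hξ₂le i
    have hd := sq_nonneg ‖z - x i‖
    rcases hcase i with hi | hi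
    · simp only [hi, if_true] at hle
      have h1 : (1 - σ) / ρhi ≤ (1 - σ) / ρ i :=
        div_le_div_of_nonneg_left (by linarith) (hρpos i) (hρB i hi)
      rw [hBid i hi, inner_smul_right, inner_add_right, real_inner_self_eq_norm_sq]
      have h2 := herr1 i hi
      calc ξ₂ * ‖z - x i‖ ^ 2 ≤ (1 - σ) / ρ i * ‖z - x i‖ ^ 2 :=
            mul_le_mul_of_nonneg_right (hle.trans h1) hd
        _ = (ρ i)⁻¹ * ((1 - σ) * ‖z - x i‖ ^ 2) := by rw [div_eq_inv_mul, mul_assoc]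
        _ ≤ _ := mul_le_mul_of_nonneg_left (by linarith) (inv_nonneg.mpr (hρpos i).le)
    · simp only [hFB i hi, if_false] at hle
      have h1 : 1 / ρbar i ≤ (ρ i)⁻¹ := by
        rw [← one_div]; exact one_div_le_one_div_of_le (hρpos i) (hρF i hi).1
      rw [hFid i hi, inner_sub_right, inner_smul_right, real_inner_self_eq_norm_sq]
      have h2 : ⟪z - x i, Tf i z - Tf i (x i)⟫ ≤ L i * ‖z - x i‖ ^ 2 := by
        calc _ ≤ ‖z - x i‖ * ‖Tf i z - Tf i (x i)‖ := real_inner_le_norm _ _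
          _ ≤ ‖z - x i‖ * (L i * ‖z - x i‖) :=
            mul_le_mul_of_nonneg_left (hLip i hi _ _) (norm_nonneg _)
          _ = _ := by ring
      have h3 : ξ₂ * ‖z - x i‖ ^ 2 ≤ ((ρ i)⁻¹ - L i) * ‖z - x i‖ ^ 2 :=
        mul_le_mul_of_nonneg_right (by linarith) hd
      linarith
  obtain ⟨S, hS⟩ : ∃ S, S = ∑ i, ‖z - x i‖ ^ 2 := ⟨_, rfl⟩
  have hφS : ξ₂ * S ≤ φval := by
    rw [hφ, hS, Finset.mul_sum]
    exact Finset.sum_le_sum fun i _ => hφi i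
  have hS0 : 0 ≤ S := by rw [hS]; positivity
  obtain ⟨K, hK⟩ : ∃ K, K = Lbar ^ 2 * (F.card : ℝ) + (1 + δ) / ρlo ^ 2 := ⟨_, rfl⟩
  have hK0 : 0 < K := by rw [hK]; positivity
  have hpar : ∀ a b : H, ‖a + b‖ ^ 2 ≤ 2 * (‖a‖ ^ 2 + ‖b‖ ^ 2) := by
    intro a b
    have := parallelogram_law_with_norm ℝ a b
    nlinarith [mul_self_nonneg ‖a - b‖]
  have hpar' : ∀ a b : H, ‖a - b‖ ^ 2 ≤ 2 * (‖a‖ ^ 2 + ‖b‖ ^ 2) := by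
    intro a b
    have := hpar a (-b)
    rwa [norm_neg, ← sub_eq_add_neg] at this
  have hinv : ∀ i, ((ρ i)⁻¹) ^ 2 ≤ 1 / ρlo ^ 2 := by
    intro i
    rw [inv_pow, ← one_div]
    exact one_div_le_one_div_of_le (by positivity) (pow_le_pow_left₀ hρlo.le (hρge i) 2)
  have hyi : ∀ i, ‖y i - wfull i‖ ^ 2 ≤ 2 * K * ‖z - x i‖ ^ 2 := by
    intro i
    have hd := sq_nonneg ‖z - x i‖
    have hr := hinv i
    rcases hcase i with hi | hi
    · rw [hBid i hi, norm_smul, mul_pow, Real.norm_eq_abs, sq_abs]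
      have h1 := hpar (z - x i) (e i)
      have h2 := herr3 i hi
      calc _ ≤ 1 / ρlo ^ 2 * (2 * (1 + δ) * ‖z - x i‖ ^ 2) :=
            mul_le_mul hr (by linarith) (by positivity) (by positivity)
        _ = 2 * ((1 + δ) / ρlo ^ 2) * ‖z - x i‖ ^ 2 := by ring
        _ ≤ _ := by
          apply mul_le_mul_of_nonneg_right _ hd
          have : 0 ≤ Lbar ^ 2 * (F.card : ℝ) := by positivity
          linarith
    · have hLi : L i ≤ Lbar := by
        rw [hLbar]
        have := Finset.le_sup' (fun i => if i ∈ F then L i else 0) (Finset.mem_univ i)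
        simpa only [hi, if_true] using this
      have hc : (1 : ℝ) ≤ F.card := by
        exact_mod_cast Finset.card_pos.mpr ⟨i, hi⟩
      have hL2 : L i ^ 2 ≤ Lbar ^ 2 := pow_le_pow_left₀ (hL0 i hi) hLi 2
      have hL3 : L i ^ 2 ≤ Lbar ^ 2 * (F.card : ℝ) :=
        hL2.trans (le_mul_of_one_le_right (sq_nonneg _) hc)
      have h1 : ‖(ρ i)⁻¹ • (z - x i)‖ ^ 2 ≤ 1 / ρlo ^ 2 * ‖z - x i‖ ^ 2 := by
        rw [norm_smul, mul_pow, Real.norm_eq_abs, sq_abs]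
        exact mul_le_mul_of_nonneg_right hr hd
      have h2 : ‖Tf i z - Tf i (x i)‖ ^ 2 ≤ L i ^ 2 * ‖z - x i‖ ^ 2 := by
        rw [← mul_pow]
        exact pow_le_pow_left₀ (norm_nonneg _) (hLip i hi _ _) 2
      have h3 : 1 / ρlo ^ 2 ≤ (1 + δ) / ρlo ^ 2 :=
        div_le_div_of_nonneg_right (by linarith) (by positivity)
      rw [hFid i hi]
      have h4 : (1 / ρlo ^ 2 + L i ^ 2) * ‖z - x i‖ ^ 2 ≤ K * ‖z - x i‖ ^ 2 :=
        mul_le_mul_of_nonneg_right (by linarith) hd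
      have h5 := hpar' ((ρ i)⁻¹ • (z - x i)) (Tf i z - Tf i (x i))
      linarith
  have hysum : ‖∑ i, y i‖ ^ 2 ≤ (m + 1 : ℝ) * (2 * K * S) := by
    have h1 : ∑ i, y i = ∑ i, (y i - wfull i) := by
      rw [Finset.sum_sub_distrib, hwsum, sub_zero]
    have h2 : ‖∑ i, (y i - wfull i)‖ ^ 2 ≤ (∑ i, ‖y i - wfull i‖) ^ 2 :=
      pow_le_pow_left₀ (norm_nonneg _) (norm_sum_le _ _) 2
    have h3 := sq_sum_le_card_mul_sum_sq (s := (Finset.univ : Finset (Fin (m+1))))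
      (f := fun i => ‖y i - wfull i‖)
    rw [Finset.card_univ, Fintype.card_fin] at h3
    push_cast at h3
    have h4 : ∑ i, ‖y i - wfull i‖ ^ 2 ≤ 2 * K * S := by
      rw [hS, Finset.mul_sum]
      exact Finset.sum_le_sum fun i _ => hyi i
    rw [h1]
    exact h2.trans (h3.trans (mul_le_mul_of_nonneg_left h4 (by positivity)))
  have hxsum : ∑ i : Fin m, ‖x i.castSucc - x (Fin.last m)‖ ^ 2 ≤ 2 * (m + 1 : ℝ) * S := by
    have h1 : ∀ i : Fin m, ‖x i.castSucc - x (Fin.last m)‖ ^ 2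
        ≤ 2 * (‖z - x (Fin.last m)‖ ^ 2 + ‖z - x i.castSucc‖ ^ 2) := by
      intro i
      have := hpar' (z - x (Fin.last m)) (z - x i.castSucc)
      rwa [sub_sub_sub_cancel_left] at this
    have h2 := Finset.sum_le_sum fun i (_ : i ∈ (Finset.univ : Finset (Fin m))) => h1 i
    rw [← Finset.mul_sum, Finset.sum_add_distrib, Finset.sum_const, Finset.card_univ,
      Fintype.card_fin, nsmul_eq_mul] at h2
    rw [Fin.sum_univ_castSucc] at hS
    have h3 : 0 ≤ ∑ i : Fin m, ‖z - x i.castSucc‖ ^ 2 := by positivity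
    have h4 := sq_nonneg ‖z - x (Fin.last m)‖
    have h5 : (m : ℝ) * ‖z - x (Fin.last m)‖ ^ 2 ≤ m * S :=
      mul_le_mul_of_nonneg_left (by linarith) (by positivity)
    linarith
  rw [← hK] at hξ₁
  have hξ₁pos : 0 < ξ₁ := by rw [hξ₁]; positivity
  have hπS : π ≤ ξ₁ * S := by
    have h1 : (1 / γ) * ‖∑ i, y i‖ ^ 2 ≤ (1 / γ) * ((m + 1 : ℝ) * (2 * K * S)) :=
      mul_le_mul_of_nonneg_left hysum (by positivity)
    have h2 : 0 ≤ (1 / γ) * ((m + 1 : ℝ) * (2 * K * S)) := by positivity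
    have h3 : ξ₁ * S = 2 * ((1 / γ) * ((m + 1 : ℝ) * (2 * K * S))) + 2 * (m + 1 : ℝ) * S := by
      rw [hξ₁]; ring
    rw [hπdef, h3]
    linarith
  refine ⟨?_, by positivity⟩
  rw [hα, div_le_div_iff₀ hξ₁pos hπpos]
  calc β * ξ₂ * π ≤ β * ξ₂ * (ξ₁ * S) := mul_le_mul_of_nonneg_left hπS (by positivity)
    _ = β * (ξ₂ * S) * ξ₁ := by ring
    _ ≤ β * φval * ξ₁ :=
      mul_le_mul_of_nonneg_right (mul_le_mul_of_nonneg_left hφS hβ.le) hξ₁pos.le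
end

section
/- Under the hypotheses of one iteration of projective splitting at p = (z, w₁,…,w_{n−1}), suppose the gradient g = (γ⁻¹(y₁+⋯+yₙ), x₁ − xₙ, …, x_{n−1} − xₙ) of the separator function φ is nonzero, and let p⁺ = p − β (φ(p)/‖g‖_γ²) g with β ∈ [β̲, β̄], 0 < β̲ ≤ β̄ < 2. Then Σ_{i=1}^{n} ‖z − x_i‖² ≤ (ξ₁/(β̲² ξ₂²)) ‖p⁺ − p‖_γ², where ξ₁ = 2n[1 + 2γ⁻¹(L̄²|F| + ρ̲⁻²(1+δ))] and ξ₂ = min{(1−σ)ρ̄⁻¹, min_{j∈F}(ρ̄_j⁻¹ − L_j)}. -/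
open scoped RealInnerProductSpace

theorem aux_norm_sum_sq {H : Type*} [NormedAddCommGroup H] (n : ℕ) (f : Fin n → H) :
    ‖∑ i, f i‖ ^ 2 ≤ n * ∑ i, ‖f i‖ ^ 2 := by
  have h := norm_sum_le Finset.univ f
  have h2 := sq_sum_le_card_mul_sum_sq (s := Finset.univ) (f := fun i => ‖f i‖)
  simp only [Finset.card_univ, Fintype.card_fin] at h2
  refine le_trans ?_ h2
  gcongr

set_option maxHeartbeats 2000000

/-- After the relaxed projection step `p⁺ = p − β (φ(p)/‖g‖_γ²) g` of one
iteration of projective splitting (with `g` the nonzero γ-gradient of the separator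
function and `β ∈ [β̲, β̄] ⊆ (0,2)`), one has
`Σᵢ ‖z − xᵢ‖² ≤ (ξ₁/(β̲² ξ₂²)) ‖p⁺ − p‖_γ²`.  Here `n = m+1 ≥ 1`. -/
theorem x_residual_bound_one_iteration
    {H : Type*} [NormedAddCommGroup H] [InnerProductSpace ℝ H] [CompleteSpace H]
    (m : ℕ) (γ : ℝ) (hγ : 0 < γ)
    (B F : Finset (Fin (m+1))) (hBF : Disjoint B F) (hBFunion : B ∪ F = Finset.univ)
    (T : Fin (m+1) → H → Set H) (Tf : Fin (m+1) → H → H) (L : Fin (m+1) → ℝ)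
    (hTmono : ∀ i ∈ B, ∀ x x' y y' : H, y ∈ T i x → y' ∈ T i x' → 0 ≤ ⟪x - x', y - y'⟫)
    (hTfmono : ∀ i ∈ F, ∀ u v : H, 0 ≤ ⟪u - v, Tf i u - Tf i v⟫)
    (hL0 : ∀ i ∈ F, 0 ≤ L i)
    (hLip : ∀ i ∈ F, ∀ u v : H, ‖Tf i u - Tf i v‖ ≤ L i * ‖u - v‖)
    (z : H) (w : Fin m → H) (wfull : Fin (m+1) → H)
    (hwfull : wfull = Fin.snoc w (-(∑ i : Fin m, w i)))
    (x y : Fin (m+1) → H) (ρ : Fin (m+1) → ℝ) (e : Fin (m+1) → H)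
    (σ δ : ℝ) (hσ0 : 0 ≤ σ) (hσ1 : σ < 1) (hδ : 0 ≤ δ)
    (ρlo ρhi : ℝ) (ρbar : Fin (m+1) → ℝ)
    (hρlo : 0 < ρlo) (hρge : ∀ i, ρlo ≤ ρ i)
    (hρB : ∀ i ∈ B, ρ i ≤ ρhi)
    (hρF : ∀ i ∈ F, ρ i ≤ ρbar i ∧ ρbar i * L i < 1)
    (hback : ∀ i ∈ B, y i ∈ T i (x i) ∧ x i + ρ i • y i = z + ρ i • wfull i + e i)
    (hforw : ∀ i ∈ F, x i = z - ρ i • (Tf i z - wfull i) ∧ y i = Tf i (x i))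
    (herr1 : ∀ i ∈ B, -(σ * ‖z - x i‖ ^ 2) ≤ ⟪z - x i, e i⟫)
    (herr2 : ∀ i ∈ B, ⟪e i, y i - wfull i⟫ ≤ ρ i * σ * ‖y i - wfull i‖ ^ 2)
    (herr3 : ∀ i ∈ B, ‖e i‖ ^ 2 ≤ δ * ‖z - x i‖ ^ 2)
    (φval : ℝ)
    (hφval : φval = (∑ i : Fin m, ⟪z - x i.castSucc, y i.castSucc - w i⟫)
      + ⟪z - x (Fin.last m), y (Fin.last m) + ∑ i : Fin m, w i⟫)
    (Lbar : ℝ)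
    (hLbar : Lbar = Finset.univ.sup' Finset.univ_nonempty (fun i => if i ∈ F then L i else 0))
    (ξ₁ : ℝ)
    (hξ₁ : ξ₁ = 2 * (m+1 : ℝ) *
      (1 + 2 / γ * (Lbar ^ 2 * (F.card : ℝ) + (1 + δ) / ρlo ^ 2)))
    (ξ₂ : ℝ)
    (hξ₂ : ξ₂ = Finset.univ.inf' Finset.univ_nonempty
      (fun i => if i ∈ B then (1 - σ) / ρhi else 1 / ρbar i - L i))
    (π : ℝ)
    (hπdef : π = (1 / γ) * ‖∑ i : Fin (m+1), y i‖ ^ 2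
      + ∑ i : Fin m, ‖x i.castSucc - x (Fin.last m)‖ ^ 2)
    (hπpos : 0 < π)
    (β βlo βhi : ℝ) (hβlo : 0 < βlo) (hβ1 : βlo ≤ β) (hβ2 : β ≤ βhi) (hβhi : βhi < 2)
    (α : ℝ) (hα : α = β * φval / π)
    (zplus : H) (wplus : Fin m → H)
    (hzplus : zplus = z - ((1 / γ) * α) • (∑ i : Fin (m+1), y i))
    (hwplus : ∀ i : Fin m, wplus i = w i - α • (x i.castSucc - x (Fin.last m))) :
    ∑ i : Fin (m+1), ‖z - x i‖ ^ 2
      ≤ (ξ₁ / (βlo ^ 2 * ξ₂ ^ 2)) *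
        (γ * ‖zplus - z‖ ^ 2 + ∑ i : Fin m, ‖wplus i - w i‖ ^ 2) := by
  have hcov : ∀ i, i ∈ B ∨ i ∈ F := fun i => by
    rw [← Finset.mem_union, hBFunion]; exact Finset.mem_univ i
  have hρpos : ∀ i, 0 < ρ i := fun i => lt_of_lt_of_le hρlo (hρge i)
  have hnotB : ∀ i ∈ F, i ∉ B := fun i hF hB => Finset.disjoint_left.mp hBF hB hF
  have hξ₂le : ∀ i, ξ₂ ≤ if i ∈ B then (1 - σ) / ρhi else 1 / ρbar i - L i := fun i => by
    rw [hξ₂]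
    exact Finset.inf'_le (fun i => if i ∈ B then (1 - σ) / ρhi else 1 / ρbar i - L i)
      (Finset.mem_univ i)
  have hξ₂pos : 0 < ξ₂ := by
    rw [hξ₂, Finset.lt_inf'_iff]
    intro i _
    rcases hcov i with hi | hi
    · rw [if_pos hi]
      exact div_pos (by linarith) ((hρpos i).trans_le (hρB i hi))
    · rw [if_neg (hnotB i hi)]
      have hb : 0 < ρbar i := (hρpos i).trans_le (hρF i hi).1
      have := (hρF i hi).2
      rw [sub_pos, lt_div_iff₀ hb]
      linarith
  -- identities
  have hdB : ∀ i ∈ B, y i - wfull i = (1 / ρ i) • ((z - x i) + e i) := fun i hi => by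
    have h := (hback i hi).2
    have h1 : (z - x i) + e i = ρ i • (y i - wfull i) := by
      rw [smul_sub, sub_add_eq_add_sub, sub_eq_sub_iff_add_eq_add, add_right_comm, ← h, add_comm]
    rw [h1, smul_smul, one_div, inv_mul_cancel₀ (hρpos i).ne', one_smul]
  have hdF : ∀ i ∈ F, y i - wfull i = (1 / ρ i) • (z - x i) + (Tf i (x i) - Tf i z) :=
    fun i hi => by
    have h1 : z - x i = ρ i • (Tf i z - wfull i) := by
      rw [(hforw i hi).1]; abel
    rw [h1, smul_smul, one_div, inv_mul_cancel₀ (hρpos i).ne', one_smul, (hforw i hi).2]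
    abel
  have hlow : ∀ i, ξ₂ * ‖z - x i‖ ^ 2 ≤ ⟪z - x i, y i - wfull i⟫ := fun i => by
    have hl := hξ₂le i
    have hr := hρpos i
    rcases hcov i with hi | hi
    · rw [if_pos hi] at hl
      rw [hdB i hi, inner_smul_right, inner_add_right, real_inner_self_eq_norm_sq]
      have h1 := herr1 i hi
      have h2 : (1 - σ) / ρhi ≤ (1 / ρ i) * (1 - σ) := by
        rw [one_div_mul_eq_div]
        exact div_le_div_of_nonneg_left (by linarith) hr (hρB i hi)
      calc ξ₂ * ‖z - x i‖ ^ 2 ≤ ((1 / ρ i) * (1 - σ)) * ‖z - x i‖ ^ 2 := by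
            gcongr; linarith
        _ = (1 / ρ i) * ((1 - σ) * ‖z - x i‖ ^ 2) := by ring
        _ ≤ _ := by gcongr; linarith
    · rw [if_neg (hnotB i hi)] at hl
      rw [hdF i hi, inner_add_right, inner_smul_right, real_inner_self_eq_norm_sq]
      have h1 : 1 / ρbar i ≤ 1 / ρ i := one_div_le_one_div_of_le hr (hρF i hi).1
      have h2 : -(L i * ‖z - x i‖ ^ 2) ≤ ⟪z - x i, Tf i (x i) - Tf i z⟫ := by
        have h3 := neg_le_of_abs_le (abs_real_inner_le_norm (z - x i) (Tf i (x i) - Tf i z))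
        have h4 := hLip i hi (x i) z
        rw [norm_sub_rev (x i) z] at h4
        nlinarith [norm_nonneg (z - x i)]
      have h5 : ξ₂ * ‖z - x i‖ ^ 2 ≤ (1 / ρ i - L i) * ‖z - x i‖ ^ 2 := by
        gcongr; linarith
      linarith
  have hφ : φval = ∑ i, ⟪z - x i, y i - wfull i⟫ := by
    rw [hφval, Fin.sum_univ_castSucc, hwfull]
    simp
  have hw0 : ∑ i, wfull i = 0 := by
    rw [hwfull, Fin.sum_univ_castSucc]
    simp
  set S := ∑ i : Fin (m+1), ‖z - x i‖ ^ 2 with hS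
  have hS0 : 0 ≤ S := Finset.sum_nonneg fun i _ => by positivity
  have hφge : ξ₂ * S ≤ φval := by
    rw [hφ, hS, Finset.mul_sum]
    exact Finset.sum_le_sum fun i _ => hlow i
  set K := Lbar ^ 2 * (F.card : ℝ) + (1 + δ) / ρlo ^ 2 with hK
  have hup : ∀ i, ‖y i - wfull i‖ ^ 2 ≤ 2 * K * ‖z - x i‖ ^ 2 := fun i => by
    have hr := hρpos i
    have hinv : (1 / ρ i) ^ 2 ≤ 1 / ρlo ^ 2 := by
      rw [div_pow, one_pow]
      exact one_div_le_one_div_of_le (by positivity) (by gcongr; exact hρge i)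
    have hq : 0 ≤ 1 / ρlo ^ 2 := by positivity
    have hKe : K = Lbar ^ 2 * (F.card : ℝ) + (1 / ρlo ^ 2) * (1 + δ) := by rw [hK]; ring
    rcases hcov i with hi | hi
    · rw [hdB i hi, norm_smul, mul_pow, Real.norm_eq_abs, sq_abs]
      have h1 := aux_norm_add_sq (z - x i) (e i)
      have h2 := herr3 i hi
      calc (1 / ρ i) ^ 2 * ‖z - x i + e i‖ ^ 2
          ≤ (1 / ρlo ^ 2) * (2 * (1 + δ) * ‖z - x i‖ ^ 2) := by
            gcongr; linarith
        _ = 2 * ((1 / ρlo ^ 2) * (1 + δ)) * ‖z - x i‖ ^ 2 := by ring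
        _ ≤ _ := by
            gcongr
            rw [hKe]
            have : 0 ≤ Lbar ^ 2 * (F.card : ℝ) := by positivity
            linarith
    · rw [hdF i hi]
      have h1 := aux_norm_add_sq ((1 / ρ i) • (z - x i)) (Tf i (x i) - Tf i z)
      rw [norm_smul, mul_pow, Real.norm_eq_abs, sq_abs] at h1
      have hLle : L i ≤ Lbar := by
        have := Finset.le_sup' (fun i => if i ∈ F then L i else 0) (Finset.mem_univ i)
        rw [← hLbar] at this
        simpa [hi] using this
      have h4 : ‖Tf i (x i) - Tf i z‖ ^ 2 ≤ Lbar ^ 2 * ‖z - x i‖ ^ 2 := by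
        rw [← mul_pow]
        have h4 := hLip i hi (x i) z
        rw [norm_sub_rev (x i) z] at h4
        gcongr
        exact h4.trans (by gcongr)
      have hc : (1 : ℝ) ≤ F.card := by
        exact_mod_cast Finset.card_pos.mpr ⟨i, hi⟩
      have h5 : (1 / ρ i) ^ 2 * ‖z - x i‖ ^ 2 ≤ (1 / ρlo ^ 2) * ‖z - x i‖ ^ 2 := by gcongr
      have h6 : Lbar ^ 2 + 1 / ρlo ^ 2 ≤ K := by
        rw [hKe]
        nlinarith [sq_nonneg Lbar, mul_nonneg hq hδ]
      have h7 : (Lbar ^ 2 + 1 / ρlo ^ 2) * ‖z - x i‖ ^ 2 ≤ K * ‖z - x i‖ ^ 2 := by gcongr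
      linarith
  have hY : ‖∑ i, y i‖ ^ 2 ≤ (m + 1 : ℝ) * (2 * K * S) := by
    have h1 : ∑ i, y i = ∑ i, (y i - wfull i) := by
      rw [Finset.sum_sub_distrib, hw0, sub_zero]
    rw [h1, hS, Finset.mul_sum]
    refine (aux_norm_sum_sq (m + 1) _).trans ?_
    push_cast
    gcongr with i _
    exact hup i
  have hX : ∑ i : Fin m, ‖x i.castSucc - x (Fin.last m)‖ ^ 2 ≤ 2 * (m + 1 : ℝ) * S := by
    have h1 : ∀ i : Fin m, ‖x i.castSucc - x (Fin.last m)‖ ^ 2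
        ≤ 2 * ‖z - x i.castSucc‖ ^ 2 + 2 * ‖z - x (Fin.last m)‖ ^ 2 := fun i => by
      have h := aux_norm_add_sq (x i.castSucc - z) (z - x (Fin.last m))
      rwa [sub_add_sub_cancel, norm_sub_rev (x i.castSucc) z] at h
    refine (Finset.sum_le_sum fun i _ => h1 i).trans ?_
    rw [Finset.sum_add_distrib, ← Finset.mul_sum, Finset.sum_const, Finset.card_univ,
      Fintype.card_fin, nsmul_eq_mul]
    have h2 : S = ∑ i : Fin m, ‖z - x i.castSucc‖ ^ 2 + ‖z - x (Fin.last m)‖ ^ 2 := by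
      rw [hS, Fin.sum_univ_castSucc]
    have h3 : 0 ≤ ∑ i : Fin m, ‖z - x i.castSucc‖ ^ 2 :=
      Finset.sum_nonneg fun i _ => by positivity
    have h4 : 0 ≤ ‖z - x (Fin.last m)‖ ^ 2 := by positivity
    have h5 : (0 : ℝ) ≤ m := Nat.cast_nonneg m
    rw [h2]
    nlinarith [mul_nonneg h5 h3]
  have hπle : π ≤ ξ₁ * S := by
    have h1 : (1 / γ) * ‖∑ i, y i‖ ^ 2 ≤ (1 / γ) * ((m + 1 : ℝ) * (2 * K * S)) := by gcongr
    have h0 : 0 ≤ (1 / γ) * ((m + 1 : ℝ) * (2 * K * S)) := le_trans (by positivity) h1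
    have h2 : ξ₁ * S = 2 * (m + 1 : ℝ) * S + 2 * ((1 / γ) * ((m + 1 : ℝ) * (2 * K * S))) := by
      rw [hξ₁]; ring
    rw [hπdef, h2]
    linarith
  have hstep : γ * ‖zplus - z‖ ^ 2 + ∑ i : Fin m, ‖wplus i - w i‖ ^ 2 = α ^ 2 * π := by
    have h1 : zplus - z = -(((1 / γ) * α) • (∑ i : Fin (m+1), y i)) := by rw [hzplus]; abel
    have h2 : ∀ i, ‖wplus i - w i‖ ^ 2 = α ^ 2 * ‖x i.castSucc - x (Fin.last m)‖ ^ 2 :=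
      fun i => by
      have : wplus i - w i = -(α • (x i.castSucc - x (Fin.last m))) := by rw [hwplus i]; abel
      rw [this, norm_neg, norm_smul, mul_pow, Real.norm_eq_abs, sq_abs]
    simp only [h2]
    rw [h1, norm_neg, norm_smul, mul_pow, Real.norm_eq_abs, sq_abs, ← Finset.mul_sum, hπdef]
    field_simp
  rw [hstep]
  have hαπ : α ^ 2 * π = β ^ 2 * φval ^ 2 / π := by
    rw [hα]; field_simp
  rw [hαπ, div_mul_div_comm, le_div_iff₀ (by positivity)]
  have hξS : 0 ≤ ξ₂ * S := by positivity
  have h1 : (ξ₂ * S) ^ 2 ≤ φval ^ 2 := by gcongr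
  have h2 : βlo ^ 2 ≤ β ^ 2 := by gcongr
  have hξ₁0 : 0 ≤ ξ₁ := by
    by_contra hneg
    push Not at hneg
    nlinarith
  calc S * (βlo ^ 2 * ξ₂ ^ 2 * π) ≤ S * (βlo ^ 2 * ξ₂ ^ 2 * (ξ₁ * S)) := by gcongr
    _ = ξ₁ * (βlo ^ 2 * (ξ₂ * S) ^ 2) := by ring
    _ ≤ ξ₁ * (β ^ 2 * φval ^ 2) := by gcongr
end

section
/- Under the hypotheses of one iteration of projective splitting at p = (z, w₁,…,w_{n−1}) with wₙ = −(w₁+⋯+w_{n−1}), suppose the gradient g of the separator function φ is nonzero and let p⁺ = p − β (φ(p)/‖g‖_γ²) g with β ∈ [β̲, β̄], 0 < β̲ ≤ β̄ < 2. Then Σ_{i=1}^{n} ‖w_i − y_i‖² ≤ E₁ ‖p⁺ − p‖_γ², where E₁ = 2(1−σ)⁻¹ ρ̲⁻¹ (1 + ξ₂⁻¹ L̄ (1 + ρ̲ L̄)) · ξ₁/(β̲² ξ₂), with ξ₁ = 2n[1 + 2γ⁻¹(L̄²|F| + ρ̲⁻²(1+δ))] and ξ₂ = min{(1−σ)ρ̄⁻¹,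 min_{j∈F}(ρ̄_j⁻¹ − L_j)}. -/
open scoped RealInnerProductSpace

theorem ps_two_sq {H : Type*} [NormedAddCommGroup H] [InnerProductSpace ℝ H] (u v : H) :
    ‖u + v‖ ^ 2 ≤ 2 * ‖u‖ ^ 2 + 2 * ‖v‖ ^ 2 := by
  have h := parallelogram_law_with_norm ℝ u v
  nlinarith [sq_nonneg ‖u - v‖]

theorem ps_sum_sq {H : Type*} [NormedAddCommGroup H] [InnerProductSpace ℝ H] (n : ℕ)
    (b : Fin n → H) : ‖∑ i, b i‖ ^ 2 ≤ (n : ℝ) * ∑ i, ‖b i‖ ^ 2 := by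
  have h1 : ‖∑ i, b i‖ ≤ ∑ i, ‖b i‖ := norm_sum_le _ _
  have h2 := sq_sum_le_card_mul_sum_sq (s := (Finset.univ : Finset (Fin n))) (f := fun i => ‖b i‖)
  simp only [Finset.card_univ, Fintype.card_fin] at h2
  exact (pow_le_pow_left₀ (norm_nonneg _) h1 2).trans h2

theorem ps_back {H : Type*} [NormedAddCommGroup H] [InnerProductSpace ℝ H] (a b e : H)
    (ρ ρlo ρhi σ δ : ℝ) (hσ1 : σ < 1) (hρlo : 0 < ρlo) (h1 : ρlo ≤ ρ) (h2 : ρ ≤ ρhi)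
    (hab : ρ • b = a + e)
    (herr1 : -(σ * ‖a‖ ^ 2) ≤ ⟪a, e⟫) (herr2 : ⟪e, b⟫ ≤ ρ * σ * ‖b‖ ^ 2)
    (herr3 : ‖e‖ ^ 2 ≤ δ * ‖a‖ ^ 2) :
    (1 - σ) / ρhi * ‖a‖ ^ 2 ≤ ⟪a, b⟫ ∧ ρlo * (1 - σ) * ‖b‖ ^ 2 ≤ ⟪a, b⟫ ∧
      ‖b‖ ^ 2 ≤ 2 * ((1 + δ) / ρlo ^ 2) * ‖a‖ ^ 2 := by
  have hρ : 0 < ρ := by linarith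
  have hhi : 0 < ρhi := by linarith
  have ha := sq_nonneg ‖a‖
  have hb := sq_nonneg ‖b‖
  have e1 : ρ * ⟪a, b⟫ = ‖a‖ ^ 2 + ⟪a, e⟫ := by
    rw [← real_inner_smul_right, hab, inner_add_right, real_inner_self_eq_norm_sq]
  have e2 : ⟪a, b⟫ = ρ * ‖b‖ ^ 2 - ⟪e, b⟫ := by
    have : a = ρ • b - e := by rw [hab]; abel
    rw [this, inner_sub_left, real_inner_smul_left, real_inner_self_eq_norm_sq]
  have p0 : 0 ≤ (1 - σ) * ‖a‖ ^ 2 := mul_nonneg (by linarith) ha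
  have p1 : (1 - σ) * ‖a‖ ^ 2 ≤ ρ * ⟪a, b⟫ := by rw [e1]; linarith
  have p2 : 0 ≤ ⟪a, b⟫ := by
    by_contra h
    push Not at h
    nlinarith
  refine ⟨?_, ?_, ?_⟩
  · rw [div_mul_eq_mul_div, div_le_iff₀ hhi]
    nlinarith
  · have : ρlo * ((1 - σ) * ‖b‖ ^ 2) ≤ ρ * ((1 - σ) * ‖b‖ ^ 2) :=
      mul_le_mul_of_nonneg_right h1 (mul_nonneg (by linarith) hb)
    rw [e2]; linarith
  · have h3 : ρ ^ 2 * ‖b‖ ^ 2 = ‖a + e‖ ^ 2 := by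
      rw [← hab, norm_smul, mul_pow, Real.norm_eq_abs, sq_abs]
    have h4 := ps_two_sq a e
    have h5 : ρlo ^ 2 * ‖b‖ ^ 2 ≤ ρ ^ 2 * ‖b‖ ^ 2 :=
      mul_le_mul_of_nonneg_right (pow_le_pow_left₀ hρlo.le h1 2) hb
    have : 2 * ((1 + δ) / ρlo ^ 2) * ‖a‖ ^ 2 = (2 * (1 + δ) * ‖a‖ ^ 2) / ρlo ^ 2 := by ring
    rw [this, le_div_iff₀ (by positivity)]
    linarith

theorem ps_forw {H : Type*} [NormedAddCommGroup H] [InnerProductSpace ℝ H] (a b c d : H)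
    (ρ ρlo ρbar L : ℝ) (hρlo : 0 < ρlo) (h1 : ρlo ≤ ρ) (h2 : ρ ≤ ρbar)
    (hac : a = ρ • c) (hb : b = c + d) (hd : ‖d‖ ≤ L * ‖a‖) :
    (1 / ρbar - L) * ‖a‖ ^ 2 ≤ ⟪a, b⟫ ∧
      ρlo / 2 * ‖b‖ ^ 2 ≤ ⟪a, b⟫ + L * (1 + ρlo * L) * ‖a‖ ^ 2 ∧
      ‖b‖ ^ 2 ≤ 2 * (L ^ 2 + 1 / ρlo ^ 2) * ‖a‖ ^ 2 := by
  have hρ : 0 < ρ := by linarith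
  have hbar : 0 < ρbar := by linarith
  have ha := sq_nonneg ‖a‖
  have hc := sq_nonneg ‖c‖
  have n1 : ‖a‖ ^ 2 = ρ ^ 2 * ‖c‖ ^ 2 := by
    rw [hac, norm_smul, mul_pow, Real.norm_eq_abs, sq_abs]
  have e1 : ⟪a, b⟫ = ρ * ‖c‖ ^ 2 + ⟪a, d⟫ := by
    rw [hb, inner_add_right]
    congr 1
    rw [hac, real_inner_smul_left, real_inner_self_eq_norm_sq]
  have e2 : -(L * ‖a‖ ^ 2) ≤ ⟪a, d⟫ := by
    have := abs_le.1 (abs_real_inner_le_norm a d)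
    nlinarith [norm_nonneg a, mul_le_mul_of_nonneg_left hd (norm_nonneg a)]
  have e3 : ‖d‖ ^ 2 ≤ L ^ 2 * ‖a‖ ^ 2 := by
    rw [← mul_pow]; exact pow_le_pow_left₀ (norm_nonneg _) hd 2
  have e4 := ps_two_sq c d
  rw [← hb] at e4
  refine ⟨?_, ?_, ?_⟩
  · have : 1 / ρbar * ‖a‖ ^ 2 ≤ ρ * ‖c‖ ^ 2 := by
      rw [div_mul_eq_mul_div, div_le_iff₀ hbar, n1]
      nlinarith [mul_le_mul_of_nonneg_right h2 (mul_nonneg hρ.le hc)]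
    linarith
  · have k1 := mul_le_mul_of_nonneg_right h1 hc
    have k2 := mul_le_mul_of_nonneg_left e4 hρlo.le
    have k3 := mul_le_mul_of_nonneg_left e3 hρlo.le
    linarith
  · have : ‖c‖ ^ 2 ≤ 1 / ρlo ^ 2 * ‖a‖ ^ 2 := by
      rw [div_mul_eq_mul_div, le_div_iff₀ (by positivity), n1]
      have := mul_le_mul_of_nonneg_right (pow_le_pow_left₀ hρlo.le h1 2) hc
      linarith
    linarith

set_option maxHeartbeats 2000000 in
/-- After the relaxed projection step `p⁺ = p − β (φ(p)/‖g‖_γ²) g` of one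
iteration of projective splitting, one has `Σᵢ ‖wᵢ − yᵢ‖² ≤ E₁ ‖p⁺ − p‖_γ²`, where
`E₁ = 2(1−σ)⁻¹ρ̲⁻¹(1 + ξ₂⁻¹ L̄ (1 + ρ̲ L̄)) ξ₁/(β̲² ξ₂)`.  Here `n = m+1 ≥ 1`. -/
theorem wy_residual_bound_one_iteration
    {H : Type*} [NormedAddCommGroup H] [InnerProductSpace ℝ H] [CompleteSpace H]
    (m : ℕ) (γ : ℝ) (hγ : 0 < γ)
    (B F : Finset (Fin (m+1))) (hBF : Disjoint B F) (hBFunion : B ∪ F = Finset.univ)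
    (T : Fin (m+1) → H → Set H) (Tf : Fin (m+1) → H → H) (L : Fin (m+1) → ℝ)
    (hTmono : ∀ i ∈ B, ∀ x x' y y' : H, y ∈ T i x → y' ∈ T i x' → 0 ≤ ⟪x - x', y - y'⟫)
    (hTfmono : ∀ i ∈ F, ∀ u v : H, 0 ≤ ⟪u - v, Tf i u - Tf i v⟫)
    (hL0 : ∀ i ∈ F, 0 ≤ L i)
    (hLip : ∀ i ∈ F, ∀ u v : H, ‖Tf i u - Tf i v‖ ≤ L i * ‖u - v‖)
    (z : H) (w : Fin m → H) (wfull : Fin (m+1) → H)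
    (hwfull : wfull = Fin.snoc w (-(∑ i : Fin m, w i)))
    (x y : Fin (m+1) → H) (ρ : Fin (m+1) → ℝ) (e : Fin (m+1) → H)
    (σ δ : ℝ) (hσ0 : 0 ≤ σ) (hσ1 : σ < 1) (hδ : 0 ≤ δ)
    (ρlo ρhi : ℝ) (ρbar : Fin (m+1) → ℝ)
    (hρlo : 0 < ρlo) (hρge : ∀ i, ρlo ≤ ρ i)
    (hρB : ∀ i ∈ B, ρ i ≤ ρhi)
    (hρF : ∀ i ∈ F, ρ i ≤ ρbar i ∧ ρbar i * L i < 1)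
    (hback : ∀ i ∈ B, y i ∈ T i (x i) ∧ x i + ρ i • y i = z + ρ i • wfull i + e i)
    (hforw : ∀ i ∈ F, x i = z - ρ i • (Tf i z - wfull i) ∧ y i = Tf i (x i))
    (herr1 : ∀ i ∈ B, -(σ * ‖z - x i‖ ^ 2) ≤ ⟪z - x i, e i⟫)
    (herr2 : ∀ i ∈ B, ⟪e i, y i - wfull i⟫ ≤ ρ i * σ * ‖y i - wfull i‖ ^ 2)
    (herr3 : ∀ i ∈ B, ‖e i‖ ^ 2 ≤ δ * ‖z - x i‖ ^ 2)
    (φval : ℝ)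
    (hφval : φval = (∑ i : Fin m, ⟪z - x i.castSucc, y i.castSucc - w i⟫)
      + ⟪z - x (Fin.last m), y (Fin.last m) + ∑ i : Fin m, w i⟫)
    (Lbar : ℝ)
    (hLbar : Lbar = Finset.univ.sup' Finset.univ_nonempty (fun i => if i ∈ F then L i else 0))
    (ξ₁ : ℝ)
    (hξ₁ : ξ₁ = 2 * (m+1 : ℝ) *
      (1 + 2 / γ * (Lbar ^ 2 * (F.card : ℝ) + (1 + δ) / ρlo ^ 2)))
    (ξ₂ : ℝ)
    (hξ₂ : ξ₂ = Finset.univ.inf' Finset.univ_nonempty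
      (fun i => if i ∈ B then (1 - σ) / ρhi else 1 / ρbar i - L i))
    (π : ℝ)
    (hπdef : π = (1 / γ) * ‖∑ i : Fin (m+1), y i‖ ^ 2
      + ∑ i : Fin m, ‖x i.castSucc - x (Fin.last m)‖ ^ 2)
    (hπpos : 0 < π)
    (β βlo βhi : ℝ) (hβlo : 0 < βlo) (hβ1 : βlo ≤ β) (hβ2 : β ≤ βhi) (hβhi : βhi < 2)
    (α : ℝ) (hα : α = β * φval / π)
    (zplus : H) (wplus : Fin m → H)
    (hzplus : zplus = z - ((1 / γ) * α) • (∑ i : Fin (m+1), y i))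
    (hwplus : ∀ i : Fin m, wplus i = w i - α • (x i.castSucc - x (Fin.last m)))
    (E₁ : ℝ)
    (hE₁ : E₁ = 2 * (1 - σ)⁻¹ * ρlo⁻¹ * (1 + ξ₂⁻¹ * Lbar * (1 + ρlo * Lbar)) *
      (ξ₁ / (βlo ^ 2 * ξ₂))) :
    ∑ i : Fin (m+1), ‖wfull i - y i‖ ^ 2
      ≤ E₁ * (γ * ‖zplus - z‖ ^ 2 + ∑ i : Fin m, ‖wplus i - w i‖ ^ 2) := by
  have hmem : ∀ i, i ∈ B ∨ i ∈ F := fun i => by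
    have : i ∈ B ∪ F := by rw [hBFunion]; exact Finset.mem_univ i
    exact Finset.mem_union.1 this
  have hFB : ∀ i ∈ F, i ∉ B := fun i hi hb => Finset.disjoint_left.1 hBF hb hi
  have hLle : ∀ i ∈ F, L i ≤ Lbar := fun i hi => by
    have := Finset.le_sup' (fun i => if i ∈ F then L i else 0) (Finset.mem_univ i)
    rw [← hLbar] at this
    simpa [hi] using this
  have hLb0 : 0 ≤ Lbar := by
    have := Finset.le_sup' (fun i => if i ∈ F then L i else 0) (Finset.mem_univ (0 : Fin (m+1)))
    rw [← hLbar] at this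
    refine le_trans ?_ this
    split_ifs with h
    · exact hL0 _ h
    · exact le_rfl
  have hξ2pos : 0 < ξ₂ := by
    rw [hξ₂, Finset.lt_inf'_iff]
    intro i _
    split_ifs with h
    · exact div_pos (by linarith) (by linarith [hρge i, hρB i h])
    · have hF := (hmem i).resolve_left h
      obtain ⟨h1, h2⟩ := hρF i hF
      have : 0 < ρbar i := by linarith [hρge i]
      rw [sub_pos, lt_div_iff₀ this]
      linarith
  have hξ2le : ∀ i, ξ₂ ≤ if i ∈ B then (1 - σ) / ρhi else 1 / ρbar i - L i := fun i => by
    rw [hξ₂]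
    exact Finset.inf'_le (fun i => if i ∈ B then (1 - σ) / ρhi else 1 / ρbar i - L i)
      (Finset.mem_univ i)
  have hwsum : ∑ i, wfull i = 0 := by
    rw [hwfull, Fin.sum_univ_castSucc]; simp
  have hφ : φval = ∑ i, ⟪z - x i, y i - wfull i⟫ := by
    rw [hφval, Fin.sum_univ_castSucc, hwfull]; simp
  obtain ⟨K, hK⟩ : ∃ K, K = Lbar ^ 2 * (F.card : ℝ) + (1 + δ) / ρlo ^ 2 := ⟨_, rfl⟩
  have hK0 : 0 ≤ K := by rw [hK]; positivity
  obtain ⟨M, hM⟩ : ∃ M, M = Lbar * (1 + ρlo * Lbar) := ⟨_, rfl⟩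
  have hM0 : 0 ≤ M := by rw [hM]; positivity
  have key : ∀ i, ξ₂ * ‖z - x i‖ ^ 2 ≤ ⟪z - x i, y i - wfull i⟫ ∧
      ρlo * (1 - σ) / 2 * ‖y i - wfull i‖ ^ 2 ≤ ⟪z - x i, y i - wfull i⟫ + M * ‖z - x i‖ ^ 2 ∧
      ‖y i - wfull i‖ ^ 2 ≤ 2 * K * ‖z - x i‖ ^ 2 := by
    intro i
    have ha := sq_nonneg ‖z - x i‖
    have hb := sq_nonneg ‖y i - wfull i‖
    have hle := hξ2le i
    rcases hmem i with h | h
    · rw [if_pos h] at hle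
      have hab : ρ i • (y i - wfull i) = (z - x i) + e i := by
        have h2 : ρ i • y i = z + ρ i • wfull i + e i - x i := by rw [← (hback i h).2]; abel
        rw [smul_sub, h2]; abel
      obtain ⟨p, q, r⟩ := ps_back _ _ _ (ρ i) ρlo ρhi σ δ hσ1 hρlo (hρge i) (hρB i h) hab
        (herr1 i h) (herr2 i h) (herr3 i h)
      refine ⟨(mul_le_mul_of_nonneg_right hle ha).trans p, ?_, r.trans ?_⟩
      · have : 0 ≤ ρlo * (1 - σ) * ‖y i - wfull i‖ ^ 2 :=
          mul_nonneg (mul_nonneg hρlo.le (by linarith)) hb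
        have := mul_nonneg hM0 ha
        linarith
      · have : 0 ≤ Lbar ^ 2 * (F.card : ℝ) := by positivity
        exact mul_le_mul_of_nonneg_right (by linarith) ha
    · rw [if_neg (hFB i h)] at hle
      obtain ⟨hx, hy⟩ := hforw i h
      have hLi := hL0 i h
      have hLl := hLle i h
      obtain ⟨p, q, r⟩ := ps_forw (z - x i) (y i - wfull i) (Tf i z - wfull i) (y i - Tf i z)
        (ρ i) ρlo (ρbar i) (L i) hρlo (hρge i) (hρF i h).1
        (by rw [hx]; abel) (by abel)
        (by rw [hy, norm_sub_rev z]; exact hLip i h _ _)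
      refine ⟨(mul_le_mul_of_nonneg_right hle ha).trans p, ?_, r.trans ?_⟩
      · have k1 : L i * (1 + ρlo * L i) ≤ M := by rw [hM]; gcongr
        have k2 := mul_le_mul_of_nonneg_right k1 ha
        have k3 : 0 ≤ ρlo / 2 * σ * ‖y i - wfull i‖ ^ 2 := by positivity
        linarith
      · have k1 : (1 : ℝ) ≤ F.card := by
          exact_mod_cast Finset.card_pos.2 ⟨i, h⟩
        have k2 : L i ^ 2 ≤ Lbar ^ 2 := pow_le_pow_left₀ hLi hLl 2
        have k3 : Lbar ^ 2 * 1 ≤ Lbar ^ 2 * (F.card : ℝ) :=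
          mul_le_mul_of_nonneg_left k1 (sq_nonneg _)
        have k4 : 1 / ρlo ^ 2 ≤ (1 + δ) / ρlo ^ 2 :=
          div_le_div_of_nonneg_right (by linarith) (sq_nonneg _)
        exact mul_le_mul_of_nonneg_right (by linarith) ha
  obtain ⟨S, hS⟩ : ∃ S, S = ∑ i, ‖z - x i‖ ^ 2 := ⟨_, rfl⟩
  obtain ⟨R, hR⟩ : ∃ R, R = ∑ i, ‖y i - wfull i‖ ^ 2 := ⟨_, rfl⟩
  have hS0 : 0 ≤ S := by rw [hS]; exact Finset.sum_nonneg fun i _ => sq_nonneg _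
  have s1 : ξ₂ * S ≤ φval := by
    rw [hS, hφ, Finset.mul_sum]; exact Finset.sum_le_sum fun i _ => (key i).1
  have s2 : ρlo * (1 - σ) / 2 * R ≤ φval + M * S := by
    rw [hS, hR, hφ, Finset.mul_sum, Finset.mul_sum, ← Finset.sum_add_distrib]
    exact Finset.sum_le_sum fun i _ => (key i).2.1
  have s3 : R ≤ 2 * K * S := by
    rw [hS, hR, Finset.mul_sum]; exact Finset.sum_le_sum fun i _ => (key i).2.2
  have t1 : ‖∑ i, y i‖ ^ 2 ≤ (m + 1 : ℝ) * R := by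
    have := ps_sum_sq (m+1) (fun i => y i - wfull i)
    rw [Finset.sum_sub_distrib, hwsum, sub_zero, ← hR] at this
    exact_mod_cast this
  have t2 : ∑ i : Fin m, ‖x i.castSucc - x (Fin.last m)‖ ^ 2 ≤ 2 * (m + 1 : ℝ) * S := by
    have u1 : ∀ i : Fin m, ‖x i.castSucc - x (Fin.last m)‖ ^ 2 ≤
        2 * ‖z - x (Fin.last m)‖ ^ 2 + 2 * ‖z - x i.castSucc‖ ^ 2 := fun i => by
      have := ps_two_sq (z - x (Fin.last m)) (-(z - x i.castSucc))
      rw [norm_neg] at this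
      convert this using 3
      abel
    have u2 := Finset.sum_le_sum fun i (_ : i ∈ (Finset.univ : Finset (Fin m))) => u1 i
    rw [Finset.sum_add_distrib, Finset.sum_const, Finset.card_univ, Fintype.card_fin,
      ← Finset.mul_sum, nsmul_eq_mul] at u2
    have u3 : S = ∑ i : Fin m, ‖z - x i.castSucc‖ ^ 2 + ‖z - x (Fin.last m)‖ ^ 2 := by
      rw [hS, Fin.sum_univ_castSucc]
    have u4 : 0 ≤ ∑ i : Fin m, ‖z - x i.castSucc‖ ^ 2 :=
      Finset.sum_nonneg fun i _ => sq_nonneg _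
    have u5 : 0 ≤ (m : ℝ) * ∑ i : Fin m, ‖z - x i.castSucc‖ ^ 2 := by positivity
    rw [u3]
    nlinarith [sq_nonneg ‖z - x (Fin.last m)‖]
  have hm0 : (0 : ℝ) < m + 1 := by positivity
  have hπS : π ≤ ξ₁ * S := by
    have v1 : (1 / γ) * ‖∑ i, y i‖ ^ 2 ≤ (1 / γ) * ((m + 1 : ℝ) * (2 * K * S)) := by
      gcongr
      exact t1.trans (by gcongr)
    have v2 : 0 ≤ (1 / γ) * ((m + 1 : ℝ) * (2 * K * S)) := by positivity
    have v3 : ξ₁ * S = 2 * (m + 1 : ℝ) * S + 2 * ((1 / γ) * ((m + 1 : ℝ) * (2 * K * S))) := by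
      rw [hξ₁, ← hK]; ring
    rw [v3, hπdef]; linarith
  have hξ1pos : 0 < ξ₁ := by rw [hξ₁, ← hK]; positivity
  have hφ0 : 0 ≤ φval := le_trans (by positivity) s1
  have hD : γ * ‖zplus - z‖ ^ 2 + ∑ i : Fin m, ‖wplus i - w i‖ ^ 2 = α ^ 2 * π := by
    have d1 : ‖zplus - z‖ ^ 2 = ((1 / γ) * α) ^ 2 * ‖∑ i, y i‖ ^ 2 := by
      rw [hzplus, sub_sub_cancel_left, norm_neg, norm_smul, mul_pow, Real.norm_eq_abs, sq_abs]
    have d2 : ∀ i : Fin m, ‖wplus i - w i‖ ^ 2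
        = α ^ 2 * ‖x i.castSucc - x (Fin.last m)‖ ^ 2 := fun i => by
      rw [hwplus, sub_sub_cancel_left, norm_neg, norm_smul, mul_pow, Real.norm_eq_abs, sq_abs]
    rw [d1, Finset.sum_congr rfl fun i _ => d2 i, ← Finset.mul_sum, hπdef]
    field_simp
  have hDval : α ^ 2 * π = β ^ 2 * φval ^ 2 / π := by
    rw [hα]; field_simp
  have f1 : ξ₂ * π ≤ ξ₁ * φval := by
    have := mul_le_mul_of_nonneg_left hπS hξ2pos.le
    have := mul_le_mul_of_nonneg_left s1 hξ1pos.le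
    linarith
  have f2 : φval ≤ ξ₁ / (βlo ^ 2 * ξ₂) * (α ^ 2 * π) := by
    rw [hDval, div_mul_div_comm, le_div_iff₀ (by positivity)]
    have g1 : βlo ^ 2 ≤ β ^ 2 := pow_le_pow_left₀ hβlo.le hβ1 2
    calc φval * (βlo ^ 2 * ξ₂ * π) = (φval * βlo ^ 2) * (ξ₂ * π) := by ring
      _ ≤ (φval * β ^ 2) * (ξ₁ * φval) := by gcongr
      _ = _ := by ring
  have f3 : S ≤ ξ₂⁻¹ * φval := by
    rw [inv_mul_eq_div, le_div_iff₀ hξ2pos]; linarith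
  have hσp : 0 < 1 - σ := by linarith
  have f4 : R ≤ 2 * (1 - σ)⁻¹ * ρlo⁻¹ * (1 + ξ₂⁻¹ * Lbar * (1 + ρlo * Lbar)) * φval := by
    have g1 : ρlo * (1 - σ) / 2 * R ≤ φval + M * (ξ₂⁻¹ * φval) :=
      s2.trans (by gcongr)
    have g2 : R = 2 * (1 - σ)⁻¹ * ρlo⁻¹ * (ρlo * (1 - σ) / 2 * R) := by
      field_simp
    rw [g2]
    calc _ ≤ 2 * (1 - σ)⁻¹ * ρlo⁻¹ * (φval + M * (ξ₂⁻¹ * φval)) := by gcongr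
      _ = _ := by rw [hM]; ring
  rw [hD, hE₁]
  have hfin : ∑ i, ‖wfull i - y i‖ ^ 2 = R := by
    rw [hR]; exact Finset.sum_congr rfl fun i _ => by rw [norm_sub_rev]
  rw [hfin, mul_assoc]
  refine f4.trans (mul_le_mul_of_nonneg_left f2 ?_)
  positivity
end

section
/- Let H be a real Hilbert space, n ≥ 1, k ≥ 1, and α̲ > 0. For t = 1,…,k let α_t ≥ α̲ and let points x_i^t ∈ H (i = 1,…,n) and w_i^t ∈ H (i = 1,…,n−1, t = 1,…,k+1) satisfy the dual update w_i^{t+1} = w_i^t − α_t (x_i^t − x_n^t) for every i = 1,…,n−1 and t = 1,…,k. Suppose there are vectors w_i* ∈ H and a constant C ≥ 0 with ‖w_i^t − w_i*‖ ≤ C for all i = 1,…,n−1 and t = 1,…,k+1. Define the ergodic iterates x̄_i^k = (Σ_{t=1}^{k} α_t x_i^t)/(Σ_{t=1}^{k} α_t). Then for all i, l ∈ {1,…,n}, ‖x̄_i^k − x̄_l^k‖ ≤ 4C/(α̲ k). -/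
open scoped RealInnerProductSpace

/-- If the dual variables follow the update
`wᵢ^{t+1} = wᵢ^t − α_t (xᵢ^t − xₙ^t)` with `α_t ≥ α̲ > 0`, and `‖wᵢ^t − wᵢ*‖ ≤ C` for all
`i` and `t = 1,…,k+1`, then the ergodic iterates
`x̄ᵢ = (Σ_t α_t xᵢ^t)/(Σ_t α_t)` satisfy `‖x̄ᵢ − x̄ₗ‖ ≤ 4C/(α̲ k)` for all
`i, l ∈ {1,…,n}`.  Here `n = m+1 ≥ 1`. -/
theorem ergodic_iterates_close
    {H : Type*} [NormedAddCommGroup H] [InnerProductSpace ℝ H] [CompleteSpace H]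
    (m : ℕ) (k : ℕ) (hk : 1 ≤ k)
    (α : ℕ → ℝ) (αlo : ℝ) (hαlo : 0 < αlo)
    (hα : ∀ t, 1 ≤ t → t ≤ k → αlo ≤ α t)
    (x : ℕ → Fin (m+1) → H) (w : ℕ → Fin m → H)
    (hupd : ∀ t, 1 ≤ t → t ≤ k → ∀ i : Fin m,
      w (t+1) i = w t i - (α t) • (x t i.castSucc - x t (Fin.last m)))
    (wstar : Fin m → H) (C : ℝ) (hC : 0 ≤ C)
    (hbdd : ∀ t, 1 ≤ t → t ≤ k + 1 → ∀ i : Fin m, ‖w t i - wstar i‖ ≤ C)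
    (xbar : Fin (m+1) → H)
    (hxbar : ∀ i, xbar i = (∑ t ∈ Finset.Icc 1 k, α t)⁻¹ •
      ∑ t ∈ Finset.Icc 1 k, α t • x t i) :
    ∀ i l : Fin (m+1), ‖xbar i - xbar l‖ ≤ 4 * C / (αlo * k) := by
  have hS : αlo * k ≤ ∑ t ∈ Finset.Icc 1 k, α t := by
    have h := Finset.card_nsmul_le_sum (Finset.Icc 1 k) α αlo (fun t ht => by
      rw [Finset.mem_Icc] at ht
      exact hα t ht.1 ht.2)
    rw [Nat.card_Icc, nsmul_eq_mul] at h
    simp only [Nat.add_sub_cancel] at h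
    linarith
  have hk0 : (0 : ℝ) < k := by exact_mod_cast hk
  have hpos : 0 < αlo * k := mul_pos hαlo hk0
  have htel : ∀ i : Fin m, ∀ j : ℕ, j ≤ k →
      ∑ t ∈ Finset.Icc 1 j, α t • (x t i.castSucc - x t (Fin.last m)) = w 1 i - w (j+1) i := by
    intro i j
    induction j with
    | zero => intro _; simp
    | succ j ih =>
      intro hj
      rw [Finset.sum_Icc_succ_top (by omega), ih (by omega), hupd (j+1) (by omega) hj i]
      abel
  have key : ∀ i : Fin (m+1), ‖xbar i - xbar (Fin.last m)‖ ≤ 2 * C / (αlo * k) := by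
    intro i
    refine Fin.lastCases ?_ (fun i => ?_) i
    · rw [sub_self, norm_zero]
      positivity
    · rw [hxbar, hxbar, ← smul_sub, ← Finset.sum_sub_distrib]
      simp only [← smul_sub]
      rw [htel i k le_rfl, norm_smul, norm_inv, Real.norm_of_nonneg (hpos.le.trans hS),
        inv_mul_eq_div]
      have h1 := hbdd 1 le_rfl (by omega) i
      have h2 := hbdd (k+1) (by omega) le_rfl i
      have h3 : ‖w 1 i - w (k+1) i‖ ≤ 2 * C := by
        have h4 := norm_sub_le (w 1 i - wstar i) (w (k+1) i - wstar i)
        rw [sub_sub_sub_cancel_right] at h4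
        linarith
      exact div_le_div₀ (by positivity) h3 hpos hS
  intro i l
  have h4 := norm_sub_le (xbar i - xbar (Fin.last m)) (xbar l - xbar (Fin.last m))
  rw [sub_sub_sub_cancel_right] at h4
  have h5 : 4 * C / (αlo * k) = 2 * C / (αlo * k) + 2 * C / (αlo * k) := by ring
  rw [h5]
  linarith [key i, key l]
end

section
/- Consider problem min_z Σ_{i=1}^n f_i(z) on a real Hilbert space H with each f_i convex, and suppose the projective splitting algorithm is run forever without termination: for every k ≥ 1 there are iterates z^k, w_i^k (i=1,…,n−1, with w_n^k = −Σ_{i=1}^{n−1} w_i^k), x_i^k, y_i^k, stepsizes ρ_i^k, errors e_i^k, and relaxations β_k ∈ [β̲, β̄] with 0 < β̲ ≤ β̄ < 2, such that: {1,…,n} is partitioned into disjoint sets B and F; for i ∈ B, y_i^k is a subgradient of f_i at x_i^k, x_i^k + ρ_i^k y_i^k = z^k + ρ_i^k w_i^k + e_i^k, and for some σ ∈ [0,1), δ ≥ 0: ⟨z^k − x_i^k, e_i^k⟩ ≥ −σ‖z^k − x_i^k‖², ⟨e_i^k, y_i^k − w_i^k⟩ ≤ ρ_i^k σ‖y_i^k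 − w_i^k‖², ‖e_i^k‖² ≤ δ‖z^k − x_i^k‖²; for i ∈ F, f_i is differentiable with L_i-Lipschitz gradient, x_i^k = z^k − ρ_i^k(∇f_i(z^k) − w_i^k), and y_i^k = ∇f_i(x_i^k); the stepsizes satisfy ρ_i^k ≥ ρ̲ > 0 for all i, ρ_i^k ≤ ρ̄ < ∞ for i ∈ B, and ρ_i^k ≤ ρ̄_i < 1/L_i for i ∈ F; the gradient g_k = (γ⁻¹ Σ_{i=1}^n y_i^k, x_1^k − x_n^k, …, x_{n−1}^k − x_n^k) of the separator function φ_k built from (x_i^k, y_i^k) is nonzero; and with α_k = β_k φ_k(p^k)/‖g_k‖_γ² (where p^k = (z^k, w_1^k,…,w_{n−1}^k)), the updates are z^{k+1} = z^k − γ⁻¹ α_k Σ_{i=1}^n y_i^k and w_i^{k+1} = w_i^k − α_k (x_i^k − x_n^k) for i = 1,…,n−1. Suppose there exists (z*, w_1*, …, w_{n−1}*) ∈ Hⁿ with w_i* a subgradient of f_i at z* (i = 1,…,n−1) and −(w_1*+⋯+w_{n−1}*) a subgradient of fₙ at z*. Then there exists a constant C ≥ 0, independent of k, such that for all k ≥ 1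 the ergodic iterates x̄_i^k = (Σ_{t=1}^k α_t x_i^t)/(Σ_{t=1}^k α_t) satisfy Σ_{i=1}^n f_i(x̄_i^k) − Σ_{i=1}^n f_i(z*) ≤ C/k. -/
open scoped RealInnerProductSpace

/-- `y` is a subgradient of `f : H → ℝ ∪ {+∞}` at `x`: `f x` is finite and
`f u ≥ f x + ⟪y, u − x⟫` for all `u`. -/
def IsSubgradient {H : Type*} [NormedAddCommGroup H] [InnerProductSpace ℝ H]
    (f : H → WithTop ℝ) (x y : H) : Prop :=
  f x ≠ ⊤ ∧ ∀ u, f x + ((⟪y, u - x⟫ : ℝ) : WithTop ℝ) ≤ f u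

/-- Jensen's inequality for a convex extended-real function at points with finite values. -/
lemma jensen_aux {H : Type*} [NormedAddCommGroup H] [InnerProductSpace ℝ H]
    (f : H → WithTop ℝ)
    (hconv : ∀ a b : ℝ, ∀ u v : H, 0 < a → 0 < b → a + b = 1 →
      f (a • u + b • v) ≤ ((a : ℝ) : WithTop ℝ) * f u + ((b : ℝ) : WithTop ℝ) * f v)
    (a v : ℕ → ℝ) (x : ℕ → H) (ha : ∀ t, 1 ≤ t → 0 < a t)
    (hv : ∀ t, 1 ≤ t → f (x t) = (v t : WithTop ℝ)) (k : ℕ) (hk : 1 ≤ k) :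
    0 < (∑ t ∈ Finset.Icc 1 k, a t) ∧
    f ((∑ t ∈ Finset.Icc 1 k, a t)⁻¹ • ∑ t ∈ Finset.Icc 1 k, a t • x t) ≤
      (((∑ t ∈ Finset.Icc 1 k, a t)⁻¹ * ∑ t ∈ Finset.Icc 1 k, a t * v t : ℝ) : WithTop ℝ) := by
  induction k, hk using Nat.le_induction with
  | base =>
    have h1 := ha 1 le_rfl
    simp only [Finset.Icc_self, Finset.sum_singleton]
    refine ⟨h1, ?_⟩
    rw [smul_smul, inv_mul_cancel₀ h1.ne', one_smul, hv 1 le_rfl, ← mul_assoc,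
      inv_mul_cancel₀ h1.ne', one_mul]
  | succ k hk ih =>
    obtain ⟨hS, ih⟩ := ih
    have hk1 : 1 ≤ k + 1 := by omega
    simp only [Finset.sum_Icc_succ_top hk1]
    have h1 := ha (k+1) hk1
    set S := ∑ t ∈ Finset.Icc 1 k, a t
    set X := ∑ t ∈ Finset.Icc 1 k, a t • x t
    set V := ∑ t ∈ Finset.Icc 1 k, a t * v t
    have hT : 0 < S + a (k+1) := by positivity
    refine ⟨hT, ?_⟩
    have hc := hconv (S / (S + a (k+1))) (a (k+1) / (S + a (k+1))) (S⁻¹ • X) (x (k+1))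
      (by positivity) (by positivity) (by field_simp)
    have e1 : (S / (S + a (k+1))) • (S⁻¹ • X) + (a (k+1) / (S + a (k+1))) • x (k+1)
        = (S + a (k+1))⁻¹ • (X + a (k+1) • x (k+1)) := by
      rw [smul_add, smul_smul, smul_smul]
      congr 2
      · field_simp
      · field_simp
    rw [e1, hv (k+1) hk1] at hc
    refine hc.trans ?_
    obtain ⟨r, hr⟩ := WithTop.ne_top_iff_exists.mp (ne_top_of_le_ne_top WithTop.coe_ne_top ih)
    rw [← hr] at ih ⊢
    have ih' := WithTop.coe_le_coe.mp ih
    norm_cast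
    have : S / (S + a (k+1)) * r ≤ S / (S + a (k+1)) * (S⁻¹ * V) :=
      mul_le_mul_of_nonneg_left ih' (by positivity)
    have e2 : S / (S + a (k+1)) * (S⁻¹ * V) + a (k+1) / (S + a (k+1)) * v (k+1) =
      (S + a (k+1))⁻¹ * (V + a (k+1) * v (k+1)) := by field_simp
    linarith

lemma back_aux {H : Type*} [NormedAddCommGroup H] [InnerProductSpace ℝ H]
    (z x y w e : H) (ρ σ ρlo ρhi : ℝ) (hρlo : 0 < ρlo) (h1 : ρlo ≤ ρ) (h2 : ρ ≤ ρhi)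
    (hσ1 : σ < 1)
    (h : x + ρ • y = z + ρ • w + e)
    (he1 : -(σ * ‖z - x‖ ^ 2) ≤ ⟪z - x, e⟫)
    (he2 : ⟪e, y - w⟫ ≤ ρ * σ * ‖y - w‖ ^ 2) :
    min ((1 - σ) / ρhi) (ρlo * (1 - σ)) / 2 * (‖z - x‖ ^ 2 + ‖y - w‖ ^ 2) ≤ ⟪z - x, y - w⟫ := by
  have hzx : z - x = ρ • (y - w) - e := by
    rw [smul_sub]
    have : z = x + ρ • y - ρ • w - e := by rw [h]; abel
    rw [this]; abel
  have hyw : ρ • (y - w) = (z - x) + e := by rw [hzx]; abel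
  have hρ : 0 < ρ := by linarith
  have a1 : (1 - σ) * ‖z - x‖ ^ 2 ≤ ρ * ⟪z - x, y - w⟫ := by
    rw [← inner_smul_right, hyw, inner_add_right, real_inner_self_eq_norm_sq]
    linarith
  have a2 : ρ * (1 - σ) * ‖y - w‖ ^ 2 ≤ ⟪z - x, y - w⟫ := by
    rw [hzx, inner_sub_left, inner_smul_left, real_inner_self_eq_norm_sq]
    simp only [conj_trivial]
    linarith
  have hs : 0 < 1 - σ := by linarith
  have hi : 0 ≤ ⟪z - x, y - w⟫ := le_trans (by positivity) a2
  have b1 : (1 - σ) / ρhi * ‖z - x‖ ^ 2 ≤ ⟪z - x, y - w⟫ := by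
    rw [div_mul_eq_mul_div, div_le_iff₀ (by linarith)]
    nlinarith
  have b2 : ρlo * (1 - σ) * ‖y - w‖ ^ 2 ≤ ⟪z - x, y - w⟫ := by
    refine le_trans ?_ a2
    gcongr
  have c1 := mul_le_mul_of_nonneg_right (min_le_left ((1 - σ) / ρhi) (ρlo * (1 - σ)))
    (sq_nonneg ‖z - x‖)
  have c2 := mul_le_mul_of_nonneg_right (min_le_right ((1 - σ) / ρhi) (ρlo * (1 - σ)))
    (sq_nonneg ‖y - w‖)
  linarith

lemma forw_aux {H : Type*} [NormedAddCommGroup H] [InnerProductSpace ℝ H]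
    (z x y w g : H) (ρ L ρlo ρbar : ℝ) (hρlo : 0 < ρlo) (h1 : ρlo ≤ ρ) (h2 : ρ ≤ ρbar)
    (hL : 0 ≤ L) (hbar : ρbar * L < 1)
    (h : x = z - ρ • (g - w)) (hlip : ‖g - y‖ ≤ L * ‖z - x‖) :
    (1 / ρbar - L) / (1 + (1 / ρlo + L) ^ 2) * (‖z - x‖ ^ 2 + ‖y - w‖ ^ 2) ≤ ⟪z - x, y - w⟫ := by
  have hρ : 0 < ρ := by linarith
  have hρb : 0 < ρbar := by linarith
  have hzx : g - w = ρ⁻¹ • (z - x) := by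
    rw [h, sub_sub_cancel, smul_smul, inv_mul_cancel₀ hρ.ne', one_smul]
  have e1 : y - w = ρ⁻¹ • (z - x) - (g - y) := by rw [← hzx]; abel
  have hc : 0 < 1 / ρbar - L := by
    rw [sub_pos, lt_div_iff₀ hρb]; linarith
  have hcs : ⟪z - x, g - y⟫ ≤ L * ‖z - x‖ ^ 2 := by
    have := real_inner_le_norm (z - x) (g - y)
    nlinarith [norm_nonneg (z - x)]
  have a1 : (1 / ρbar - L) * ‖z - x‖ ^ 2 ≤ ⟪z - x, y - w⟫ := by
    rw [e1, inner_sub_right, inner_smul_right, real_inner_self_eq_norm_sq]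
    have : 1 / ρbar ≤ ρ⁻¹ := by rw [one_div]; gcongr
    nlinarith [sq_nonneg ‖z - x‖]
  have a2 : ‖y - w‖ ≤ (1 / ρlo + L) * ‖z - x‖ := by
    rw [e1]
    refine (norm_sub_le _ _).trans ?_
    rw [norm_smul, Real.norm_of_nonneg (by positivity), add_mul, one_div]
    gcongr
  have a3 : ‖y - w‖ ^ 2 ≤ (1 / ρlo + L) ^ 2 * ‖z - x‖ ^ 2 := by
    rw [← mul_pow]; gcongr
  refine le_trans ?_ a1
  rw [div_mul_eq_mul_div, div_le_iff₀ (by positivity), mul_assoc]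
  refine mul_le_mul_of_nonneg_left ?_ hc.le
  linarith

lemma pi_aux {H : Type*} [NormedAddCommGroup H] [InnerProductSpace ℝ H]
    (m : ℕ) (γ : ℝ) (hγ : 0 < γ) (z : H) (x y w : Fin (m+1) → H) (hw : ∑ i, w i = 0) :
    (1 / γ) * ‖∑ i : Fin (m+1), y i‖ ^ 2
      + ∑ i : Fin m, ‖x i.castSucc - x (Fin.last m)‖ ^ 2 ≤
    ((1 / γ) * (m + 1) + 2 * (m + 1)) * ∑ i, (‖z - x i‖ ^ 2 + ‖y i - w i‖ ^ 2) := by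
  have e1 : ∑ i, y i = ∑ i, (y i - w i) := by rw [Finset.sum_sub_distrib, hw, sub_zero]
  have h1 : ‖∑ i, y i‖ ^ 2 ≤ (m + 1) * ∑ i, ‖y i - w i‖ ^ 2 := by
    rw [e1]
    calc ‖∑ i, (y i - w i)‖ ^ 2 ≤ (∑ i, ‖y i - w i‖) ^ 2 := by
          gcongr; exact norm_sum_le _ _
      _ ≤ _ := by
          have := sq_sum_le_card_mul_sum_sq (s := Finset.univ) (f := fun i => ‖y i - w i‖)
          simpa using this
  have h2 : ∑ i : Fin m, ‖x i.castSucc - x (Fin.last m)‖ ^ 2 ≤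
      2 * (m + 1) * ∑ i, ‖z - x i‖ ^ 2 := by
    have : ∀ i : Fin m, ‖x i.castSucc - x (Fin.last m)‖ ^ 2 ≤
        2 * ‖z - x i.castSucc‖ ^ 2 + 2 * ‖z - x (Fin.last m)‖ ^ 2 := by
      intro i
      have e : x i.castSucc - x (Fin.last m) = (z - x (Fin.last m)) - (z - x i.castSucc) := by abel
      have := norm_sub_le (z - x (Fin.last m)) (z - x i.castSucc)
      rw [e]
      nlinarith [norm_nonneg ((z - x (Fin.last m)) - (z - x i.castSucc)),
        sq_nonneg (‖z - x (Fin.last m)‖ - ‖z - x i.castSucc‖)]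
    refine (Finset.sum_le_sum fun i _ => this i).trans ?_
    rw [Finset.sum_add_distrib, ← Finset.mul_sum, Fin.sum_univ_castSucc]
    simp only [Finset.sum_const, Finset.card_univ, Fintype.card_fin, nsmul_eq_mul]
    have : 0 ≤ ∑ i : Fin m, ‖z - x i.castSucc‖ ^ 2 := by positivity
    have h0 : (0:ℝ) ≤ m := by positivity
    nlinarith [mul_nonneg h0 this, sq_nonneg ‖z - x (Fin.last m)‖]
  rw [Finset.sum_add_distrib]
  have p1 : 0 ≤ ∑ i, ‖z - x i‖ ^ 2 := by positivity
  have p2 : 0 ≤ ∑ i, ‖y i - w i‖ ^ 2 := by positivity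
  have h3 : (1 / γ) * ‖∑ i, y i‖ ^ 2 ≤ (1 / γ) * ((m + 1) * ∑ i, ‖y i - w i‖ ^ 2) :=
    mul_le_mul_of_nonneg_left h1 (by positivity)
  have q1 : 0 ≤ (1 / γ) * (m + 1) * ∑ i, ‖z - x i‖ ^ 2 := by positivity
  have q2 : 0 ≤ 2 * ((m:ℝ) + 1) * ∑ i, ‖y i - w i‖ ^ 2 := by positivity
  linarith

/-- The affine identity `-φ(z*,0) = -φ(p) + ⟨∇φ, p - (z*,0)⟩`. -/
lemma phi_aux {H : Type*} [NormedAddCommGroup H] [InnerProductSpace ℝ H]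
    (m : ℕ) (z s : H) (x y : Fin (m+1) → H) (w : Fin m → H) :
    ∑ i, ⟪y i, x i - s⟫ =
      -((∑ i : Fin m, ⟪z - x i.castSucc, y i.castSucc - w i⟫)
        + ⟪z - x (Fin.last m), y (Fin.last m) + ∑ i : Fin m, w i⟫)
      + (⟪∑ i, y i, z - s⟫ + ∑ i : Fin m, ⟪x i.castSucc - x (Fin.last m), w i⟫) := by
  rw [Fin.sum_univ_castSucc, Fin.sum_univ_castSucc, inner_add_left, sum_inner, inner_add_right,
    inner_sum]
  have : ∀ i : Fin m, ⟪y i.castSucc, x i.castSucc - s⟫ =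
    -⟪z - x i.castSucc, y i.castSucc - w i⟫ - ⟪z - x (Fin.last m), w i⟫ +
      ⟪y i.castSucc, z - s⟫ + ⟪x i.castSucc - x (Fin.last m), w i⟫ := by
    intro i
    simp only [inner_sub_left, inner_sub_right]
    rw [real_inner_comm (y i.castSucc) z, real_inner_comm (y i.castSucc) (x i.castSucc)]
    ring
  rw [Finset.sum_congr rfl fun i _ => this i]
  simp only [Finset.sum_add_distrib, Finset.sum_sub_distrib, Finset.sum_neg_distrib]
  simp only [inner_sub_left, inner_sub_right]
  rw [real_inner_comm (y (Fin.last m)) z, real_inner_comm (y (Fin.last m)) (x (Fin.last m))]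
  ring

lemma energy_aux {H : Type*} [NormedAddCommGroup H] [InnerProductSpace ℝ H]
    (m : ℕ) (γ : ℝ) (hγ : 0 < γ) (z s Y : H) (w d : Fin m → H) (α : ℝ) :
    γ * ‖z - ((1 / γ) * α) • Y - s‖ ^ 2 + ∑ i, ‖w i - α • d i‖ ^ 2 =
      γ * ‖z - s‖ ^ 2 + ∑ i, ‖w i‖ ^ 2 - 2 * α * (⟪Y, z - s⟫ + ∑ i, ⟪d i, w i⟫)
      + α ^ 2 * ((1 / γ) * ‖Y‖ ^ 2 + ∑ i, ‖d i‖ ^ 2) := by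
  have e : z - ((1 / γ) * α) • Y - s = (z - s) - ((1 / γ) * α) • Y := by abel
  rw [e, norm_sub_sq_real, norm_smul, inner_smul_right, mul_pow, Real.norm_eq_abs, sq_abs,
    real_inner_comm]
  have : ∀ i, ‖w i - α • d i‖ ^ 2 = ‖w i‖ ^ 2 - 2 * α * ⟪d i, w i⟫ + α ^ 2 * ‖d i‖ ^ 2 := by
    intro i
    rw [norm_sub_sq_real, norm_smul, inner_smul_right, mul_pow, Real.norm_eq_abs, sq_abs,
      real_inner_comm]
    ring
  rw [Finset.sum_congr rfl fun i _ => this i]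
  simp only [Finset.sum_add_distrib, Finset.sum_sub_distrib, ← Finset.mul_sum]
  field_simp
  ring

/-- Ergodic `O(1/k)` function-value convergence rate of projective
splitting for `min_z Σᵢ fᵢ(z)` with `n = m+1 ≥ 1` convex functions: if the algorithm runs
forever (every separator gradient is nonzero) and the extended solution set is nonempty,
then there is a constant `C ≥ 0` such that the ergodic iterates
`x̄ᵢ^k = (Σ_{t=1}^k α_t xᵢ^t)/(Σ_{t=1}^k α_t)` satisfy
`Σᵢ fᵢ(x̄ᵢ^k) − Σᵢ fᵢ(z*) ≤ C/k` for all `k ≥ 1`. -/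
theorem ergodic_function_value_rate
    {H : Type*} [NormedAddCommGroup H] [InnerProductSpace ℝ H] [CompleteSpace H]
    (m : ℕ) (γ : ℝ) (hγ : 0 < γ)
    (f : Fin (m+1) → H → WithTop ℝ)
    (hconv : ∀ i, ∀ a b : ℝ, ∀ u v : H, 0 < a → 0 < b → a + b = 1 →
      f i (a • u + b • v) ≤ ((a : ℝ) : WithTop ℝ) * f i u + ((b : ℝ) : WithTop ℝ) * f i v)
    (B F : Finset (Fin (m+1))) (hBF : Disjoint B F) (hBFunion : B ∪ F = Finset.univ)
    (gf : Fin (m+1) → H → H) (L : Fin (m+1) → ℝ) (hL0 : ∀ i ∈ F, 0 ≤ L i)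
    (hgrad : ∀ i ∈ F, ∀ u : H, IsSubgradient (f i) u (gf i u))
    (hLip : ∀ i ∈ F, ∀ u v : H, ‖gf i u - gf i v‖ ≤ L i * ‖u - v‖)
    (z : ℕ → H) (w : ℕ → Fin m → H) (wfull : ℕ → Fin (m+1) → H)
    (hwfull : ∀ k, wfull k = Fin.snoc (w k) (-(∑ i : Fin m, w k i)))
    (x y : ℕ → Fin (m+1) → H) (ρ : ℕ → Fin (m+1) → ℝ) (e : ℕ → Fin (m+1) → H)
    (σ δ : ℝ) (hσ0 : 0 ≤ σ) (hσ1 : σ < 1) (hδ : 0 ≤ δ)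
    (β : ℕ → ℝ) (βlo βhi : ℝ) (hβlo : 0 < βlo) (hβle : βlo ≤ βhi) (hβhi : βhi < 2)
    (hβ : ∀ k, 1 ≤ k → βlo ≤ β k ∧ β k ≤ βhi)
    (ρlo ρhi : ℝ) (ρbar : Fin (m+1) → ℝ) (hρlo : 0 < ρlo)
    (hρge : ∀ k, 1 ≤ k → ∀ i, ρlo ≤ ρ k i)
    (hρB : ∀ k, 1 ≤ k → ∀ i ∈ B, ρ k i ≤ ρhi)
    (hρF : ∀ k, 1 ≤ k → ∀ i ∈ F, ρ k i ≤ ρbar i ∧ ρbar i * L i < 1)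
    (hback : ∀ k, 1 ≤ k → ∀ i ∈ B, IsSubgradient (f i) (x k i) (y k i) ∧
      x k i + ρ k i • y k i = z k + ρ k i • wfull k i + e k i)
    (hforw : ∀ k, 1 ≤ k → ∀ i ∈ F,
      x k i = z k - ρ k i • (gf i (z k) - wfull k i) ∧ y k i = gf i (x k i))
    (herr1 : ∀ k, 1 ≤ k → ∀ i ∈ B, -(σ * ‖z k - x k i‖ ^ 2) ≤ ⟪z k - x k i, e k i⟫)
    (herr2 : ∀ k, 1 ≤ k → ∀ i ∈ B,
      ⟪e k i, y k i - wfull k i⟫ ≤ ρ k i * σ * ‖y k i - wfull k i‖ ^ 2)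
    (herr3 : ∀ k, 1 ≤ k → ∀ i ∈ B, ‖e k i‖ ^ 2 ≤ δ * ‖z k - x k i‖ ^ 2)
    (π φval α : ℕ → ℝ)
    (hπ : ∀ k, 1 ≤ k → π k = (1 / γ) * ‖∑ i : Fin (m+1), y k i‖ ^ 2
      + ∑ i : Fin m, ‖x k i.castSucc - x k (Fin.last m)‖ ^ 2)
    (hπpos : ∀ k, 1 ≤ k → 0 < π k)
    (hφval : ∀ k, 1 ≤ k →
      φval k = (∑ i : Fin m, ⟪z k - x k i.castSucc, y k i.castSucc - w k i⟫)
        + ⟪z k - x k (Fin.last m), y k (Fin.last m) + ∑ i : Fin m, w k i⟫)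
    (hα : ∀ k, 1 ≤ k → α k = β k * φval k / π k)
    (hzupd : ∀ k, 1 ≤ k → z (k+1) = z k - ((1 / γ) * α k) • (∑ i : Fin (m+1), y k i))
    (hwupd : ∀ k, 1 ≤ k → ∀ i : Fin m,
      w (k+1) i = w k i - α k • (x k i.castSucc - x k (Fin.last m)))
    (zstar : H) (wstar : Fin m → H)
    (hws : ∀ i : Fin m, IsSubgradient (f i.castSucc) zstar (wstar i))
    (hwsn : IsSubgradient (f (Fin.last m)) zstar (-(∑ i : Fin m, wstar i))) :
    ∃ C : ℝ, 0 ≤ C ∧ ∀ k, 1 ≤ k →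
      (∑ i : Fin (m+1),
          f i ((∑ t ∈ Finset.Icc 1 k, α t)⁻¹ • ∑ t ∈ Finset.Icc 1 k, α t • x t i))
        ≤ (∑ i : Fin (m+1), f i zstar) + (((C / k : ℝ)) : WithTop ℝ) := by
  classical
  -- sums of the dual variables vanish
  have hwsum : ∀ k, ∑ i, wfull k i = 0 := by
    intro k
    rw [Fin.sum_univ_castSucc, hwfull]
    simp
  have hφ' : ∀ k, 1 ≤ k → φval k = ∑ i, ⟪z k - x k i, y k i - wfull k i⟫ := by
    intro k hk
    rw [hφval k hk, Fin.sum_univ_castSucc, hwfull]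
    simp
  have hmem : ∀ i, i ∈ B ∨ i ∈ F := fun i => by
    rw [← Finset.mem_union, hBFunion]; exact Finset.mem_univ i
  have hsub : ∀ k, 1 ≤ k → ∀ i, IsSubgradient (f i) (x k i) (y k i) := by
    intro k hk i
    rcases hmem i with h | h
    · exact (hback k hk i h).1
    · rw [(hforw k hk i h).2]; exact hgrad i h _
  -- blockwise lower bounds
  have hblock : ∀ i, ∃ c : ℝ, 0 < c ∧ ∀ k, 1 ≤ k →
      c * (‖z k - x k i‖ ^ 2 + ‖y k i - wfull k i‖ ^ 2) ≤ ⟪z k - x k i, y k i - wfull k i⟫ := by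
    intro i
    have hs : 0 < 1 - σ := by linarith
    rcases hmem i with h | h
    · have hhi : 0 < ρhi := by
        have := hρge 1 le_rfl i
        have := hρB 1 le_rfl i h
        linarith
      refine ⟨min ((1 - σ) / ρhi) (ρlo * (1 - σ)) / 2, by positivity, fun k hk => ?_⟩
      exact back_aux _ _ _ _ (e k i) (ρ k i) σ ρlo ρhi hρlo (hρge k hk i) (hρB k hk i h) hσ1
        (hback k hk i h).2 (herr1 k hk i h) (herr2 k hk i h)
    · have hb : 0 < ρbar i := by
        have := hρge 1 le_rfl i
        have := (hρF 1 le_rfl i h).1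
        linarith
      have hc : 0 < 1 / ρbar i - L i := by
        have := (hρF 1 le_rfl i h).2
        rw [sub_pos, lt_div_iff₀ hb]; linarith
      refine ⟨(1 / ρbar i - L i) / (1 + (1 / ρlo + L i) ^ 2), by positivity, fun k hk => ?_⟩
      refine forw_aux _ _ _ _ (gf i (z k)) (ρ k i) (L i) ρlo (ρbar i) hρlo (hρge k hk i)
        (hρF k hk i h).1 (hL0 i h) (hρF k hk i h).2 (hforw k hk i h).1 ?_
      rw [(hforw k hk i h).2]
      exact hLip i h _ _
  choose c hc0 hc using hblock
  obtain ⟨i0, -, hi0⟩ := Finset.exists_min_image (Finset.univ : Finset (Fin (m+1))) c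
    ⟨0, Finset.mem_univ _⟩
  set M : ℝ := (1 / γ) * (m + 1) + 2 * (m + 1) with hM
  have hMpos : 0 < M := by positivity
  have hφlow : ∀ k, 1 ≤ k → c i0 / M * π k ≤ φval k := by
    intro k hk
    have h1 := pi_aux m γ hγ (z k) (x k) (y k) (wfull k) (hwsum k)
    rw [← hπ k hk] at h1
    have h2 : c i0 * ∑ i, (‖z k - x k i‖ ^ 2 + ‖y k i - wfull k i‖ ^ 2) ≤ φval k := by
      rw [hφ' k hk, Finset.mul_sum]
      refine Finset.sum_le_sum fun i _ => le_trans ?_ (hc i k hk)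
      exact mul_le_mul_of_nonneg_right (hi0 i (Finset.mem_univ _)) (by positivity)
    have h3 : c i0 / M * π k ≤ c i0 / M * (M * ∑ i, (‖z k - x k i‖ ^ 2 + ‖y k i - wfull k i‖ ^ 2)) :=
      mul_le_mul_of_nonneg_left h1 (div_pos (hc0 i0) hMpos).le
    refine h3.trans (le_trans (le_of_eq ?_) h2)
    field_simp
  set a0 : ℝ := βlo * (c i0 / M) with ha0
  have hcM : 0 < c i0 / M := div_pos (hc0 i0) hMpos
  have ha0pos : 0 < a0 := mul_pos hβlo hcM
  have hαlow : ∀ k, 1 ≤ k → a0 ≤ α k := by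
    intro k hk
    rw [hα k hk, le_div_iff₀ (hπpos k hk), ha0, mul_assoc]
    exact mul_le_mul (hβ k hk).1 (hφlow k hk) (mul_pos hcM (hπpos k hk)).le
      (hβlo.le.trans (hβ k hk).1)
  have hαpos : ∀ k, 1 ≤ k → 0 < α k := fun k hk => ha0pos.trans_le (hαlow k hk)
  -- finite values
  have hv : ∀ i t, ∃ r : ℝ, 1 ≤ t → f i (x t i) = (r : WithTop ℝ) := by
    intro i t
    by_cases ht : 1 ≤ t
    · obtain ⟨r, hr⟩ := WithTop.ne_top_iff_exists.mp (hsub t ht i).1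
      exact ⟨r, fun _ => hr.symm⟩
    · exact ⟨0, fun h => absurd h ht⟩
  choose v hv using hv
  have hs : ∀ i, ∃ r : ℝ, f i zstar = (r : WithTop ℝ) := by
    intro i
    have : f i zstar ≠ ⊤ := by
      induction i using Fin.lastCases with
      | last => exact hwsn.1
      | cast i => exact (hws i).1
    obtain ⟨r, hr⟩ := WithTop.ne_top_iff_exists.mp this
    exact ⟨r, hr.symm⟩
  choose fs hfs using hs
  have hvs : ∀ t, 1 ≤ t → ∀ i, v i t ≤ fs i + ⟪y t i, x t i - zstar⟫ := by
    intro t ht i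
    have h := (hsub t ht i).2 zstar
    rw [hv i t ht, hfs i, ← WithTop.coe_add, WithTop.coe_le_coe] at h
    rw [← neg_sub zstar, inner_neg_right]
    linarith
  -- energy decrease
  set E : ℕ → ℝ := fun k => γ * ‖z k - zstar‖ ^ 2 + ∑ i, ‖w k i‖ ^ 2 with hE
  have hE0 : ∀ k, 0 ≤ E k := fun k => by simp only [hE]; positivity
  have hstep : ∀ t, 1 ≤ t → α t * ∑ i, v i t ≤ α t * ∑ i, fs i + (E t - E (t+1)) / 2 := by
    intro t ht
    have h1 := energy_aux m γ hγ (z t) zstar (∑ i, y t i) (w t)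
      (fun i => x t i.castSucc - x t (Fin.last m)) (α t)
    have h2 : E (t+1) = E t - 2 * α t * (⟪∑ i, y t i, z t - zstar⟫ +
        ∑ i : Fin m, ⟪x t i.castSucc - x t (Fin.last m), w t i⟫) + α t ^ 2 * π t := by
      simp only [hE]
      rw [hπ t ht, ← h1, hzupd t ht]
      simp only [hwupd t ht]
    have h3 := phi_aux m (z t) zstar (x t) (y t) (w t)
    rw [← hφval t ht] at h3
    have h4 : α t ^ 2 * π t = α t * (β t * φval t) := by
      have := (hπpos t ht).ne'
      have h5 : α t * π t = β t * φval t := by rw [hα t ht]; field_simp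
      rw [← h5]; ring
    have h6 : ∑ i, v i t ≤ ∑ i, fs i + ∑ i, ⟪y t i, x t i - zstar⟫ := by
      rw [← Finset.sum_add_distrib]
      exact Finset.sum_le_sum fun i _ => hvs t ht i
    have h7 := mul_le_mul_of_nonneg_left h6 (hαpos t ht).le
    have h8 : 0 ≤ φval t := (mul_pos hcM (hπpos t ht)).le.trans (hφlow t ht)
    have h9 : 0 ≤ α t * φval t * (2 - β t) :=
      mul_nonneg (mul_nonneg (hαpos t ht).le h8) (by linarith [(hβ t ht).2])
    rw [h3] at h7
    rw [h4] at h2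
    nlinarith
  have hsum : ∀ k, 1 ≤ k → ∑ t ∈ Finset.Icc 1 k, α t * ∑ i, v i t ≤
      (∑ t ∈ Finset.Icc 1 k, α t) * ∑ i, fs i + (E 1 - E (k+1)) / 2 := by
    intro k hk
    induction k, hk using Nat.le_induction with
    | base => simpa using hstep 1 le_rfl
    | succ k hk ih =>
      have hk1 : 1 ≤ k + 1 := by omega
      simp only [Finset.sum_Icc_succ_top hk1]
      have := hstep (k+1) hk1
      linarith
  have hS : ∀ k, 1 ≤ k → k * a0 ≤ ∑ t ∈ Finset.Icc 1 k, α t := by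
    intro k hk
    have := Finset.card_nsmul_le_sum (Finset.Icc 1 k) α a0
      (fun t ht => hαlow t (Finset.mem_Icc.mp ht).1)
    simpa using this
  refine ⟨E 1 / 2 / a0, div_nonneg (by linarith [hE0 1]) ha0pos.le, fun k hk => ?_⟩
  have hk0 : (0:ℝ) < k := by exact_mod_cast hk
  have hj := fun i => jensen_aux (f i) (hconv i) α (v i) (fun t => x t i) hαpos
    (fun t ht => hv i t ht) k hk
  have hSpos := (hj 0).1
  refine (Finset.sum_le_sum fun i _ => (hj i).2).trans ?_
  rw [Finset.sum_congr rfl fun i _ => hfs i]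
  set S := ∑ t ∈ Finset.Icc 1 k, α t with hSdef
  rw [← WithTop.coe_sum, ← WithTop.coe_sum, ← WithTop.coe_add, WithTop.coe_le_coe,
    ← Finset.mul_sum, Finset.sum_comm]
  simp only [← Finset.mul_sum]
  have h1 := hsum k hk
  have h2 : ∑ t ∈ Finset.Icc 1 k, α t * ∑ i, v i t ≤ S * ∑ i, fs i + E 1 / 2 := by
    linarith [hE0 (k+1)]
  have h3 : S⁻¹ * ∑ t ∈ Finset.Icc 1 k, α t * ∑ i, v i t ≤ S⁻¹ * (S * ∑ i, fs i + E 1 / 2) :=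
    mul_le_mul_of_nonneg_left h2 (inv_pos.mpr hSpos).le
  refine h3.trans ?_
  rw [mul_add, ← mul_assoc, inv_mul_cancel₀ hSpos.ne', one_mul]
  gcongr
  rw [div_div, mul_comm a0, inv_mul_eq_div]
  exact div_le_div_of_nonneg_left (by linarith [hE0 1]) (by positivity) (hS k hk)
end

section
/- Let n ≥ 1 and let T₁,…,Tₙ : H → Set H be monotone operators on a real Hilbert space H such that T_l is μ-strongly monotone for some l ∈ {1,…,n} and μ > 0, and let p* = (z*, w₁*,…,w_{n−1}*) ∈ S. Let k ≥ 1 and α̲ > 0. For t = 1,…,k suppose: x_i^t, y_i^t ∈ H with y_i^t ∈ T_i x_i^t for i = 1,…,n; φ_t is the separator function built from (x_i^t, y_i^t) and g_t is its gradient with respect to ⟨·,·⟩_γ, with g_t ≠ 0; p^t ∈ Hⁿ with φ_t(p^t) ≥ 0; β_t ∈ (0,2); α_t = β_t φ_t(p^t)/‖g_t‖_γ² satisfies α_t ≥ α̲; and p^{t+1} = p^t − α_t g_t. Then μ Σ_{t=1}^{k} ‖z* − x_l^t‖² ≤ (1/(2α̲)) (Σ_{t=1}^{k} ‖p^{t+1}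 − p^t‖_γ² + ‖p¹ − p*‖_γ²), and consequently the averaged point x̄ = (1/k) Σ_{t=1}^{k} x_l^t satisfies μ ‖x̄ − z*‖² ≤ (1/(2 α̲ k)) (Σ_{t=1}^{k} ‖p^{t+1} − p^t‖_γ² + ‖p¹ − p*‖_γ²). -/
open scoped RealInnerProductSpace

/-- The separator is affine: explicit formula. -/
lemma separator_affine {H : Type*} [NormedAddCommGroup H] [InnerProductSpace ℝ H]
    (m : ℕ) (x y : Fin (m+1) → H) (z : H) (w : Fin m → H) :
    (∑ i : Fin m, ⟪z - x i.castSucc, y i.castSucc - w i⟫)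
        + ⟪z - x (Fin.last m), y (Fin.last m) + ∑ i : Fin m, w i⟫
      = ⟪z, ∑ i, y i⟫ + (∑ i : Fin m, ⟪w i, x i.castSucc - x (Fin.last m)⟫)
        - ∑ i, ⟪x i, y i⟫ := by
  have h1 : ∀ i : Fin m, ⟪z - x i.castSucc, y i.castSucc - w i⟫
      = ⟪z, y i.castSucc⟫ - ⟪z, w i⟫ - ⟪x i.castSucc, y i.castSucc⟫ + ⟪w i, x i.castSucc⟫ := by
    intro i
    rw [inner_sub_left, inner_sub_right, inner_sub_right, real_inner_comm (w i) (x i.castSucc)]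
    ring
  have h2 : ∀ i : Fin m, ⟪w i, x i.castSucc - x (Fin.last m)⟫
      = ⟪w i, x i.castSucc⟫ - ⟪x (Fin.last m), w i⟫ := by
    intro i
    rw [inner_sub_right, real_inner_comm (w i) (x (Fin.last m))]
  simp only [h1, h2, Fin.sum_univ_castSucc, Finset.sum_add_distrib, Finset.sum_sub_distrib,
    inner_sub_left, inner_add_right, inner_sum]
  ring

/-- One-step expansion of the weighted distance. -/
lemma step_expand {H : Type*} [NormedAddCommGroup H] [InnerProductSpace ℝ H]
    (m : ℕ) (γ a : ℝ) (hγ : 0 < γ) (z z' zs s : H) (w w' ws d : Fin m → H)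
    (hz : z' = z - ((1 / γ) * a) • s) (hw : ∀ i, w' i = w i - a • d i) :
    γ * ‖z' - zs‖ ^ 2 + ∑ i, ‖w' i - ws i‖ ^ 2
      = (γ * ‖z - zs‖ ^ 2 + ∑ i, ‖w i - ws i‖ ^ 2)
        - 2 * a * (⟪z - zs, s⟫ + ∑ i, ⟪w i - ws i, d i⟫)
        + (γ * ‖z' - z‖ ^ 2 + ∑ i, ‖w' i - w i‖ ^ 2) := by
  have e1 : γ * ‖z' - zs‖ ^ 2 = γ * ‖z - zs‖ ^ 2 - 2 * a * ⟪z - zs, s⟫ + γ * ‖z' - z‖ ^ 2 := by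
    have h : z' - zs = (z - zs) + (z' - z) := by abel
    have h' : z' - z = -(((1 / γ) * a) • s) := by rw [hz]; abel
    rw [h, norm_add_sq_real]
    have h3 : ⟪z - zs, z' - z⟫ = -((1 / γ) * a * ⟪z - zs, s⟫) := by
      rw [h', inner_neg_right, real_inner_smul_right]
    rw [h3]
    field_simp
    ring
  have e2 : ∀ i, ‖w' i - ws i‖ ^ 2
      = ‖w i - ws i‖ ^ 2 - 2 * a * ⟪w i - ws i, d i⟫ + ‖w' i - w i‖ ^ 2 := by
    intro i
    have h : w' i - ws i = (w i - ws i) + (w' i - w i) := by abel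
    have h' : w' i - w i = -(a • d i) := by rw [hw]; abel
    rw [h, norm_add_sq_real]
    have h3 : ⟪w i - ws i, w' i - w i⟫ = -(a * ⟪w i - ws i, d i⟫) := by
      rw [h', inner_neg_right, real_inner_smul_right]
    rw [h3]
    ring
  rw [e1, Finset.sum_congr rfl (fun i _ => e2 i), Finset.sum_add_distrib, Finset.sum_sub_distrib,
    ← Finset.mul_sum]
  ring

/-- The separator is at most `-q` at a solution. -/
lemma separator_solution {H : Type*} [NormedAddCommGroup H] [InnerProductSpace ℝ H]
    (m : ℕ) (x y : Fin (m+1) → H) (z : H) (w : Fin m → H) (l : Fin (m+1)) (q : ℝ)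
    (v : Fin (m+1) → H) (hv : ∀ i : Fin m, v i.castSucc = w i)
    (hvn : v (Fin.last m) = -(∑ i, w i))
    (h0 : ∀ i, 0 ≤ ⟪x i - z, y i - v i⟫) (hl : q ≤ ⟪x l - z, y l - v l⟫) :
    (∑ i : Fin m, ⟪z - x i.castSucc, y i.castSucc - w i⟫)
        + ⟪z - x (Fin.last m), y (Fin.last m) + ∑ i : Fin m, w i⟫ ≤ -q := by
  have h : (∑ i : Fin m, ⟪z - x i.castSucc, y i.castSucc - w i⟫)
        + ⟪z - x (Fin.last m), y (Fin.last m) + ∑ i : Fin m, w i⟫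
      = -∑ i, ⟪x i - z, y i - v i⟫ := by
    rw [← Finset.sum_neg_distrib, Fin.sum_univ_castSucc]
    simp only [← inner_neg_left, neg_sub, hv, hvn, sub_neg_eq_add]
  rw [h]
  have := Finset.single_le_sum (f := fun i => ⟪x i - z, y i - v i⟫)
    (fun i _ => h0 i) (Finset.mem_univ l)
  linarith

/-- Under strong monotonicity of `T l`, the projective splitting iterates
satisfy `μ Σ_{t=1}^k ‖z* − x_l^t‖² ≤ (1/(2α̲))(Σ_{t=1}^k ‖p^{t+1} − p^t‖_γ² + ‖p¹ − p*‖_γ²)`,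
and consequently the averaged point `x̄ = (1/k) Σ_{t=1}^k x_l^t` satisfies
`μ‖x̄ − z*‖² ≤ (1/(2α̲k))(Σ_{t=1}^k ‖p^{t+1} − p^t‖_γ² + ‖p¹ − p*‖_γ²)`.
Here `n = m+1 ≥ 1` and `‖(z,w)‖_γ² = γ‖z‖² + Σᵢ‖wᵢ‖²`. -/
theorem strong_monotonicity_ergodic_rate
    {H : Type*} [NormedAddCommGroup H] [InnerProductSpace ℝ H] [CompleteSpace H]
    (m : ℕ) (γ : ℝ) (hγ : 0 < γ)
    (T : Fin (m+1) → H → Set H)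
    (hT : ∀ i, ∀ x x' y y' : H, y ∈ T i x → y' ∈ T i x' → 0 ≤ ⟪x - x', y - y'⟫)
    (l : Fin (m+1)) (μ : ℝ) (hμ : 0 < μ)
    (hstrong : ∀ x x' y y' : H, y ∈ T l x → y' ∈ T l x' →
      μ * ‖x - x'‖ ^ 2 ≤ ⟪x - x', y - y'⟫)
    (zstar : H) (wstar : Fin m → H)
    (hmem : ∀ i : Fin m, wstar i ∈ T i.castSucc zstar)
    (hmemn : -(∑ i : Fin m, wstar i) ∈ T (Fin.last m) zstar)
    (k : ℕ) (hk : 1 ≤ k) (αlo : ℝ) (hαlo : 0 < αlo)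
    (x y : ℕ → Fin (m+1) → H)
    (hxy : ∀ t, 1 ≤ t → t ≤ k → ∀ i, y t i ∈ T i (x t i))
    (zseq : ℕ → H) (wseq : ℕ → Fin m → H)
    (φv πv α β : ℕ → ℝ)
    (hφv : ∀ t, 1 ≤ t → t ≤ k →
      φv t = (∑ i : Fin m, ⟪zseq t - x t i.castSucc, y t i.castSucc - wseq t i⟫)
        + ⟪zseq t - x t (Fin.last m), y t (Fin.last m) + ∑ i : Fin m, wseq t i⟫)
    (hπv : ∀ t, 1 ≤ t → t ≤ k → πv t = (1 / γ) * ‖∑ i : Fin (m+1), y t i‖ ^ 2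
      + ∑ i : Fin m, ‖x t i.castSucc - x t (Fin.last m)‖ ^ 2)
    (hπpos : ∀ t, 1 ≤ t → t ≤ k → 0 < πv t)
    (hφpos : ∀ t, 1 ≤ t → t ≤ k → 0 ≤ φv t)
    (hβ : ∀ t, 1 ≤ t → t ≤ k → 0 < β t ∧ β t < 2)
    (hα : ∀ t, 1 ≤ t → t ≤ k → α t = β t * φv t / πv t)
    (hαge : ∀ t, 1 ≤ t → t ≤ k → αlo ≤ α t)
    (hzupd : ∀ t, 1 ≤ t → t ≤ k →
      zseq (t+1) = zseq t - ((1 / γ) * α t) • (∑ i : Fin (m+1), y t i))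
    (hwupd : ∀ t, 1 ≤ t → t ≤ k → ∀ i : Fin m,
      wseq (t+1) i = wseq t i - α t • (x t i.castSucc - x t (Fin.last m))) :
    μ * (∑ t ∈ Finset.Icc 1 k, ‖zstar - x t l‖ ^ 2) ≤
      (1 / (2 * αlo)) *
        ((∑ t ∈ Finset.Icc 1 k, (γ * ‖zseq (t+1) - zseq t‖ ^ 2
            + ∑ i : Fin m, ‖wseq (t+1) i - wseq t i‖ ^ 2))
          + (γ * ‖zseq 1 - zstar‖ ^ 2 + ∑ i : Fin m, ‖wseq 1 i - wstar i‖ ^ 2)) ∧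
    μ * ‖(k : ℝ)⁻¹ • (∑ t ∈ Finset.Icc 1 k, x t l) - zstar‖ ^ 2 ≤
      (1 / (2 * αlo * k)) *
        ((∑ t ∈ Finset.Icc 1 k, (γ * ‖zseq (t+1) - zseq t‖ ^ 2
            + ∑ i : Fin m, ‖wseq (t+1) i - wseq t i‖ ^ 2))
          + (γ * ‖zseq 1 - zstar‖ ^ 2 + ∑ i : Fin m, ‖wseq 1 i - wstar i‖ ^ 2)) := by
  have key : ∀ t, 1 ≤ t → t ≤ k → 2 * αlo * (μ * ‖zstar - x t l‖ ^ 2)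
      ≤ (γ * ‖zseq t - zstar‖ ^ 2 + ∑ i : Fin m, ‖wseq t i - wstar i‖ ^ 2)
        - (γ * ‖zseq (t+1) - zstar‖ ^ 2 + ∑ i : Fin m, ‖wseq (t+1) i - wstar i‖ ^ 2)
        + (γ * ‖zseq (t+1) - zseq t‖ ^ 2 + ∑ i : Fin m, ‖wseq (t+1) i - wseq t i‖ ^ 2) := by
    intro t h1 h2
    have hv : ∀ i, (Fin.snoc wstar (-(∑ i, wstar i)) : Fin (m+1) → H) i ∈ T i zstar := by
      intro i
      refine Fin.lastCases ?_ (fun j => ?_) i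
      · simpa using hmemn
      · simpa using hmem j
    have hs := separator_solution m (x t) (y t) zstar wstar l (μ * ‖zstar - x t l‖ ^ 2)
      (Fin.snoc wstar (-(∑ i, wstar i)) : Fin (m+1) → H) (by simp) (by simp)
      (fun i => hT i _ _ _ _ (hxy t h1 h2 i) (hv i))
      (by rw [norm_sub_rev]; exact hstrong _ _ _ _ (hxy t h1 h2 l) (hv l))
    rw [separator_affine] at hs
    have hp := hφpos t h1 h2
    rw [hφv t h1 h2, separator_affine] at hp
    have he := step_expand m γ (α t) hγ (zseq t) (zseq (t+1)) zstar (∑ i, y t i) (wseq t)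
      (wseq (t+1)) wstar (fun i => x t i.castSucc - x t (Fin.last m)) (hzupd t h1 h2)
      (hwupd t h1 h2)
    simp only [inner_sub_left, Finset.sum_sub_distrib] at he
    have hq : 0 ≤ μ * ‖zstar - x t l‖ ^ 2 := by positivity
    have ha := hαge t h1 h2
    have h3 := mul_le_mul_of_nonneg_right ha hq
    have h4 : α t * (μ * ‖zstar - x t l‖ ^ 2) ≤ α t *
        (⟪zseq t, ∑ i, y t i⟫ - ⟪zstar, ∑ i, y t i⟫ +
        ((∑ i : Fin m, ⟪wseq t i, x t i.castSucc - x t (Fin.last m)⟫)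
          - ∑ i : Fin m, ⟪wstar i, x t i.castSucc - x t (Fin.last m)⟫)) := by
      apply mul_le_mul_of_nonneg_left _ (by linarith)
      linarith
    linarith
  have tel : ∀ j, j ≤ k → 2 * αlo * (μ * ∑ t ∈ Finset.Icc 1 j, ‖zstar - x t l‖ ^ 2)
      ≤ (γ * ‖zseq 1 - zstar‖ ^ 2 + ∑ i : Fin m, ‖wseq 1 i - wstar i‖ ^ 2)
        - (γ * ‖zseq (j+1) - zstar‖ ^ 2 + ∑ i : Fin m, ‖wseq (j+1) i - wstar i‖ ^ 2)
        + ∑ t ∈ Finset.Icc 1 j, (γ * ‖zseq (t+1) - zseq t‖ ^ 2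
            + ∑ i : Fin m, ‖wseq (t+1) i - wseq t i‖ ^ 2) := by
    intro j
    induction j with
    | zero => intro _; simp
    | succ j ih =>
      intro hj
      rw [Finset.sum_Icc_succ_top (by omega), Finset.sum_Icc_succ_top (by omega)]
      have := ih (by omega)
      have := key (j+1) (by omega) hj
      linarith
  have hk0 : (0:ℝ) < k := by exact_mod_cast hk
  have main := tel k le_rfl
  have hnn : 0 ≤ γ * ‖zseq (k+1) - zstar‖ ^ 2
      + ∑ i : Fin m, ‖wseq (k+1) i - wstar i‖ ^ 2 := by positivity
  have hfirst : ∀ R : ℝ, 2 * αlo * (μ * ∑ t ∈ Finset.Icc 1 k, ‖zstar - x t l‖ ^ 2) ≤ R →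
      μ * (∑ t ∈ Finset.Icc 1 k, ‖zstar - x t l‖ ^ 2) ≤ (1 / (2 * αlo)) * R := by
    intro R hR
    rw [one_div, ← div_eq_inv_mul, le_div_iff₀ (by positivity)]
    linarith
  have hA := hfirst ((∑ t ∈ Finset.Icc 1 k, (γ * ‖zseq (t+1) - zseq t‖ ^ 2
            + ∑ i : Fin m, ‖wseq (t+1) i - wseq t i‖ ^ 2))
          + (γ * ‖zseq 1 - zstar‖ ^ 2 + ∑ i : Fin m, ‖wseq 1 i - wstar i‖ ^ 2)) (by linarith)
  refine ⟨hA, ?_⟩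
  have hJ : ‖(k : ℝ)⁻¹ • (∑ t ∈ Finset.Icc 1 k, x t l) - zstar‖ ^ 2
      ≤ (k : ℝ)⁻¹ * ∑ t ∈ Finset.Icc 1 k, ‖zstar - x t l‖ ^ 2 := by
    have e : (k : ℝ)⁻¹ • (∑ t ∈ Finset.Icc 1 k, x t l) - zstar
        = (k : ℝ)⁻¹ • ∑ t ∈ Finset.Icc 1 k, (x t l - zstar) := by
      rw [Finset.sum_sub_distrib, smul_sub, Finset.sum_const, Nat.card_Icc, Nat.add_sub_cancel,
        ← Nat.cast_smul_eq_nsmul ℝ, smul_smul, inv_mul_cancel₀ hk0.ne', one_smul]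
    have hn : ‖∑ t ∈ Finset.Icc 1 k, (x t l - zstar)‖ ≤ ∑ t ∈ Finset.Icc 1 k, ‖zstar - x t l‖ := by
      refine (norm_sum_le _ _).trans (le_of_eq ?_)
      exact Finset.sum_congr rfl (fun t _ => norm_sub_rev _ _)
    have hc := sq_sum_le_card_mul_sum_sq (s := Finset.Icc 1 k) (f := fun t => ‖zstar - x t l‖)
    rw [Nat.card_Icc, Nat.add_sub_cancel] at hc
    have hc2 := (pow_le_pow_left₀ (norm_nonneg _) hn 2).trans hc
    rw [e, norm_smul, mul_pow, norm_inv, Real.norm_of_nonneg hk0.le]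
    calc _ ≤ ((k:ℝ)⁻¹) ^ 2 * (k * ∑ t ∈ Finset.Icc 1 k, ‖zstar - x t l‖ ^ 2) :=
          mul_le_mul_of_nonneg_left hc2 (by positivity)
      _ = _ := by field_simp
  calc _ ≤ μ * ((k : ℝ)⁻¹ * ∑ t ∈ Finset.Icc 1 k, ‖zstar - x t l‖ ^ 2) :=
        mul_le_mul_of_nonneg_left hJ hμ.le
    _ = (k : ℝ)⁻¹ * (μ * ∑ t ∈ Finset.Icc 1 k, ‖zstar - x t l‖ ^ 2) := by ring
    _ ≤ _ := mul_le_mul_of_nonneg_left hA (by positivity)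
    _ = _ := by rw [← mul_assoc]; congr 1; field_simp
end
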